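/- (Fidelity of the reference value.) Consider any δ ∈ (0,1) and suppose the constant c_b > 0 in the Q-EarlySettled-Advantage algorithm is sufficiently large. Then with probability at least 1 − δ, the iterates satisfy |V_h^k(s) − V_h^{R,k}(s)| ≤ 2 for all (k, h, s) ∈ [K] × [H] × S. -/

import Mathlib

open MeasureTheory Finset

/-- A finite-horizon MDP with horizon `H`, non-stationary transition kernels `P h s a ·`,
and deterministic rewards `r h s a ∈ [0,1]`. -/
structure MDP (S A : Type) [Fintype S] [Fintype A] where
  H : ℕ
  P : ℕ → S → A → S → ℝ
  r : ℕ → S → A → ℝ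
  H_pos : 1 ≤ H
  P_nonneg : ∀ h s a s', 0 ≤ P h s a s'
  P_sum_one : ∀ h s a, ∑ s', P h s a s' = 1
  r_nonneg : ∀ h s a, 0 ≤ r h s a
  r_le_one : ∀ h s a, r h s a ≤ 1

namespace MDP

variable {S A : Type} [Fintype S] [Fintype A] [Nonempty S] [Nonempty A]

/-- Optimal Q-function, defined by backward induction on the remaining number of steps
(`Qstar` below instantiates the fuel as `H + 1 - h`, so that values at step `H + 1`
vanish and the Bellman optimality equation holds for `1 ≤ h ≤ H`). -/
noncomputable def QstarAux (M : MDP S A) : ℕ → ℕ → S → A → ℝ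
  | 0, _, _, _ => 0
  | (fuel + 1), h, s, a =>
      M.r h s a + ∑ s' : S, M.P h s a s' *
        (Finset.univ.sup' Finset.univ_nonempty fun a' => QstarAux M fuel (h + 1) s' a')

/-- The optimal Q-function `Q_h^⋆`. -/
noncomputable def Qstar (M : MDP S A) (h : ℕ) (s : S) (a : A) : ℝ :=
  QstarAux M (M.H + 1 - h) h s a

/-- The optimal value function `V_h^⋆`. -/
noncomputable def Vstar (M : MDP S A) (h : ℕ) (s : S) : ℝ :=
  Finset.univ.sup' Finset.univ_nonempty fun a => M.Qstar h s a

/-- Value function `V_h^π` of a deterministic policy `π`, by backward induction. -/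
noncomputable def VpolAux (M : MDP S A) (π : ℕ → S → A) : ℕ → ℕ → S → ℝ
  | 0, _, _ => 0
  | (fuel + 1), h, s =>
      M.r h s (π h s) + ∑ s' : S, M.P h s (π h s) s' * VpolAux M π fuel (h + 1) s'

/-- The value function `V_h^π` of a deterministic policy `π`. -/
noncomputable def Vpol (M : MDP S A) (π : ℕ → S → A) (h : ℕ) (s : S) : ℝ :=
  VpolAux M π (M.H + 1 - h) h s

/-- Conditional variance `Var_{h,s,a}(V) = P_{h,s,a}(V²) - (P_{h,s,a} V)²`. -/
noncomputable def varP (M : MDP S A) (h : ℕ) (s : S) (a : A) (V : S → ℝ) : ℝ :=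
  (∑ s' : S, M.P h s a s' * (V s') ^ 2) - (∑ s' : S, M.P h s a s' * V s') ^ 2

end MDP

/-- The Q-learning rate `η_n = (H+1)/(H+n)`. -/
noncomputable def lr (H n : ℕ) : ℝ := (H + 1 : ℝ) / (H + n)

/-- `η_n^N`: equal to `η_n ∏_{i=n+1}^N (1 - η_i)` for `1 ≤ n ≤ N` (hence `η_n` for `N = n`),
`0` for `N < n`, and `η_0^N = ∏_{i=1}^N (1 - η_i)` (which is `1` if `N = 0` and `0` otherwise,
since `1 - η_1 = 0`). -/
noncomputable def lrProd (H n N : ℕ) : ℝ :=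
  if N < n then 0
  else (if n = 0 then 1 else lr H n) * ∏ i ∈ Finset.Icc (n + 1) N, (1 - lr H i)

/-- The log factor `log(SAT/δ)` with `T = KH`. -/
noncomputable def iota (S A : Type) [Fintype S] [Fintype A] (K H : ℕ) (δ : ℝ) : ℝ :=
  Real.log ((Fintype.card S : ℝ) * (Fintype.card A) * (K * H) / δ)

/-- The trajectory `(s_h^k, a_h^k)` is generated by online interaction with the MDP `M`:
states and actions are adapted to the filtration `𝓕` (with time index `(k-1)H + h`
corresponding to step `h` of episode `k`), and conditionally on the history,
`s_{h+1}^k ∼ P_h(· | s_h^k, a_h^k)`. -/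
def IsMDPTrajectory {S A : Type} [Fintype S] [Fintype A] [DecidableEq S]
    [MeasurableSpace S] [MeasurableSpace A]
    {Ω : Type} [m0 : MeasurableSpace Ω] (μ : Measure Ω)
    (M : MDP S A) (K : ℕ) (𝓕 : Filtration ℕ m0)
    (st : ℕ → ℕ → Ω → S) (ac : ℕ → ℕ → Ω → A) : Prop :=
  (∀ k ∈ Finset.Icc 1 K, ∀ h ∈ Finset.Icc 1 (M.H + 1),
      Measurable[𝓕 ((k - 1) * M.H + h)] (st k h)) ∧
  (∀ k ∈ Finset.Icc 1 K, ∀ h ∈ Finset.Icc 1 M.H,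
      Measurable[𝓕 ((k - 1) * M.H + h)] (ac k h)) ∧
  (∀ k ∈ Finset.Icc 1 K, ∀ h ∈ Finset.Icc 1 M.H, ∀ s' : S,
      μ[(fun ω => if st k (h + 1) ω = s' then (1 : ℝ) else 0) | 𝓕 ((k - 1) * M.H + h)]
        =ᵐ[μ] fun ω => M.P h (st k h ω) (ac k h ω) s')

/-- The **Q-EarlySettled-Advantage** algorithm (Algorithms 1–2 of the paper), run for `K`
episodes on the MDP `M` with bonus constant `cb` and failure probability `δ`.
The fields record the trajectory `(s_h^k, a_h^k)`, the greedy policies `π^k`, the visit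
counters, all Q/value estimates and auxiliary statistics, together with the initialization
and update equations defining the algorithm.  A quantity carrying episode index `k`
denotes its value at the *beginning* of episode `k` (`N k` is the counter at the *end*
of episode `k`, with `N 0 = 0`); `kvis n h s a` is the episode of the `n`-th visit of
`(s,a)` at step `h`. -/
structure QLAlg {S A : Type} [Fintype S] [Fintype A] [Nonempty S] [Nonempty A]
    [DecidableEq S] [DecidableEq A] (M : MDP S A) (K : ℕ) (cb δ : ℝ) where
  /-- `s_h^k` : the state visited at step `h` of episode `k` -/
  st : ℕ → ℕ → S
  /-- `a_h^k` : the action taken at step `h` of episode `k` -/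
  ac : ℕ → ℕ → A
  /-- `π^k` : the greedy policy executed during episode `k` -/
  pol : ℕ → ℕ → S → A
  /-- `N_h^k(s,a)` : number of visits of `(s,a)` at step `h` by the end of episode `k` -/
  N : ℕ → ℕ → S → A → ℕ
  /-- the combined Q-estimate `Q_h^k` -/
  Q : ℕ → ℕ → S → A → ℝ
  /-- the Hoeffding-bonus optimistic estimate `Q_h^{UCB,k}` -/
  QUCB : ℕ → ℕ → S → A → ℝ
  /-- the pessimistic estimate `Q_h^{LCB,k}` -/
  QLCB : ℕ → ℕ → S → A → ℝ
  /-- the reference-advantage estimate `Q_h^{R,k}` -/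
  QR : ℕ → ℕ → S → A → ℝ
  /-- `V_h^k` -/
  V : ℕ → ℕ → S → ℝ
  /-- `V_h^{LCB,k}` -/
  VLCB : ℕ → ℕ → S → ℝ
  /-- the reference value `V_h^{R,k}` -/
  VR : ℕ → ℕ → S → ℝ
  /-- the flag `u_ref^k` governing the final reference update -/
  uref : ℕ → ℕ → S → Prop
  /-- running mean `μ_h^{ref,k}` of the reference -/
  muRef : ℕ → ℕ → S → A → ℝ
  /-- running second moment `σ_h^{ref,k}` of the reference -/
  sigRef : ℕ → ℕ → S → A → ℝ
  /-- running weighted mean `μ_h^{adv,k}` of the advantage -/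
  muAdv : ℕ → ℕ → S → A → ℝ
  /-- running weighted second moment `σ_h^{adv,k}` of the advantage -/
  sigAdv : ℕ → ℕ → S → A → ℝ
  /-- the aggregated bonus `B_h^{R,k}` -/
  BR : ℕ → ℕ → S → A → ℝ
  /-- the bonus difference `δ_h^{R,k}` -/
  dR : ℕ → ℕ → S → A → ℝ
  /-- `bR k h` : the exploration bonus `b_h^R` computed at step `h` of episode `k` -/
  bR : ℕ → ℕ → ℝ
  /-- `kvis n h s a = k_h^n(s,a)` : the episode of the `n`-th visit of `(s,a)` at step `h` -/
  kvis : ℕ → ℕ → S → A → ℕ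
  greedy : ∀ k h s a, Q k h s a ≤ Q k h s (pol k h s)
  act_eq : ∀ k h, ac k h = pol k h (st k h)
  N_init : ∀ h s a, N 0 h s a = 0
  N_upd : ∀ k ∈ Icc 1 K, ∀ h ∈ Icc 1 M.H, ∀ s a,
    N k h s a = N (k - 1) h s a + (if s = st k h ∧ a = ac k h then 1 else 0)
  Q_init : ∀ h ∈ Icc 1 M.H, ∀ s a, Q 1 h s a = M.H
  QUCB_init : ∀ h ∈ Icc 1 M.H, ∀ s a, QUCB 1 h s a = M.H
  QR_init : ∀ h ∈ Icc 1 M.H, ∀ s a, QR 1 h s a = M.H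
  QLCB_init : ∀ h ∈ Icc 1 M.H, ∀ s a, QLCB 1 h s a = 0
  V_init : ∀ h ∈ Icc 1 M.H, ∀ s, V 1 h s = M.H
  VR_init : ∀ h ∈ Icc 1 M.H, ∀ s, VR 1 h s = M.H
  VLCB_init : ∀ h ∈ Icc 1 M.H, ∀ s, VLCB 1 h s = 0
  uref_init : ∀ h s, uref 1 h s
  mom_init : ∀ h s a, muRef 1 h s a = 0 ∧ sigRef 1 h s a = 0 ∧ muAdv 1 h s a = 0 ∧
    sigAdv 1 h s a = 0 ∧ BR 1 h s a = 0 ∧ dR 1 h s a = 0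
  V_terminal : ∀ k s, V k (M.H + 1) s = 0 ∧ VR k (M.H + 1) s = 0 ∧ VLCB k (M.H + 1) s = 0
  QUCB_upd : ∀ k ∈ Icc 1 K, ∀ h ∈ Icc 1 M.H, ∀ s a,
    QUCB (k + 1) h s a =
      if s = st k h ∧ a = ac k h then
        (1 - lr M.H (N k h s a)) * QUCB k h s a
          + lr M.H (N k h s a) *
            (M.r h s a + V k (h + 1) (st k (h + 1))
              + cb * Real.sqrt ((M.H : ℝ) ^ 3 * iota S A K M.H δ / (N k h s a)))
      else QUCB k h s a
  QLCB_upd : ∀ k ∈ Icc 1 K, ∀ h ∈ Icc 1 M.H, ∀ s a,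
    QLCB (k + 1) h s a =
      if s = st k h ∧ a = ac k h then
        (1 - lr M.H (N k h s a)) * QLCB k h s a
          + lr M.H (N k h s a) *
            (M.r h s a + VLCB k (h + 1) (st k (h + 1))
              - cb * Real.sqrt ((M.H : ℝ) ^ 3 * iota S A K M.H δ / (N k h s a)))
      else QLCB k h s a
  muRef_upd : ∀ k ∈ Icc 1 K, ∀ h ∈ Icc 1 M.H, ∀ s a,
    muRef (k + 1) h s a =
      if s = st k h ∧ a = ac k h then
        (1 - 1 / (N k h s a : ℝ)) * muRef k h s a
          + (1 / (N k h s a : ℝ)) * VR k (h + 1) (st k (h + 1))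
      else muRef k h s a
  sigRef_upd : ∀ k ∈ Icc 1 K, ∀ h ∈ Icc 1 M.H, ∀ s a,
    sigRef (k + 1) h s a =
      if s = st k h ∧ a = ac k h then
        (1 - 1 / (N k h s a : ℝ)) * sigRef k h s a
          + (1 / (N k h s a : ℝ)) * (VR k (h + 1) (st k (h + 1))) ^ 2
      else sigRef k h s a
  muAdv_upd : ∀ k ∈ Icc 1 K, ∀ h ∈ Icc 1 M.H, ∀ s a,
    muAdv (k + 1) h s a =
      if s = st k h ∧ a = ac k h then
        (1 - lr M.H (N k h s a)) * muAdv k h s a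
          + lr M.H (N k h s a) * (V k (h + 1) (st k (h + 1)) - VR k (h + 1) (st k (h + 1)))
      else muAdv k h s a
  sigAdv_upd : ∀ k ∈ Icc 1 K, ∀ h ∈ Icc 1 M.H, ∀ s a,
    sigAdv (k + 1) h s a =
      if s = st k h ∧ a = ac k h then
        (1 - lr M.H (N k h s a)) * sigAdv k h s a
          + lr M.H (N k h s a) *
              (V k (h + 1) (st k (h + 1)) - VR k (h + 1) (st k (h + 1))) ^ 2
      else sigAdv k h s a
  BR_upd : ∀ k ∈ Icc 1 K, ∀ h ∈ Icc 1 M.H, ∀ s a,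
    BR (k + 1) h s a =
      if s = st k h ∧ a = ac k h then
        cb * Real.sqrt (iota S A K M.H δ / (N k h s a)) *
          (Real.sqrt (sigRef (k + 1) h s a - (muRef (k + 1) h s a) ^ 2)
            + Real.sqrt (M.H) * Real.sqrt (sigAdv (k + 1) h s a - (muAdv (k + 1) h s a) ^ 2))
      else BR k h s a
  dR_upd : ∀ k ∈ Icc 1 K, ∀ h ∈ Icc 1 M.H, ∀ s a,
    dR (k + 1) h s a =
      if s = st k h ∧ a = ac k h then BR (k + 1) h s a - BR k h s a else dR k h s a
  bR_def : ∀ k ∈ Icc 1 K, ∀ h ∈ Icc 1 M.H,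
    bR k h = BR (k + 1) h (st k h) (ac k h)
      + (1 - lr M.H (N k h (st k h) (ac k h))) * dR (k + 1) h (st k h) (ac k h)
          / lr M.H (N k h (st k h) (ac k h))
      + cb * (M.H : ℝ) ^ 2 * iota S A K M.H δ
          / (N k h (st k h) (ac k h) : ℝ) ^ ((3 : ℝ) / 4)
  QR_upd : ∀ k ∈ Icc 1 K, ∀ h ∈ Icc 1 M.H, ∀ s a,
    QR (k + 1) h s a =
      if s = st k h ∧ a = ac k h then
        (1 - lr M.H (N k h s a)) * QR k h s a
          + lr M.H (N k h s a) *
            (M.r h s a + V k (h + 1) (st k (h + 1)) - VR k (h + 1) (st k (h + 1))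
              + muRef (k + 1) h s a + bR k h)
      else QR k h s a
  Q_upd : ∀ k ∈ Icc 1 K, ∀ h ∈ Icc 1 M.H, ∀ s a,
    Q (k + 1) h s a =
      if s = st k h ∧ a = ac k h then
        min (QR (k + 1) h s a) (min (QUCB (k + 1) h s a) (Q k h s a))
      else Q k h s a
  V_upd : ∀ k ∈ Icc 1 K, ∀ h ∈ Icc 1 M.H, ∀ s,
    V (k + 1) h s =
      if s = st k h then Finset.univ.sup' Finset.univ_nonempty (fun a => Q (k + 1) h s a)
      else V k h s
  VLCB_upd : ∀ k ∈ Icc 1 K, ∀ h ∈ Icc 1 M.H, ∀ s,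
    VLCB (k + 1) h s =
      if s = st k h then
        max (Finset.univ.sup' Finset.univ_nonempty (fun a => QLCB (k + 1) h s a)) (VLCB k h s)
      else VLCB k h s
  VR_upd_pos : ∀ k ∈ Icc 1 K, ∀ h ∈ Icc 1 M.H,
    (1 < V (k + 1) h (st k h) - VLCB (k + 1) h (st k h) ∨ uref k h (st k h)) →
      VR (k + 1) h (st k h) = V (k + 1) h (st k h)
  VR_upd_neg : ∀ k ∈ Icc 1 K, ∀ h ∈ Icc 1 M.H,
    ¬(1 < V (k + 1) h (st k h) - VLCB (k + 1) h (st k h) ∨ uref k h (st k h)) →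
      VR (k + 1) h (st k h) = VR k h (st k h)
  VR_upd_other : ∀ k ∈ Icc 1 K, ∀ h ∈ Icc 1 M.H, ∀ s, s ≠ st k h →
    VR (k + 1) h s = VR k h s
  uref_upd_pos : ∀ k ∈ Icc 1 K, ∀ h ∈ Icc 1 M.H,
    1 < V (k + 1) h (st k h) - VLCB (k + 1) h (st k h) → uref (k + 1) h (st k h)
  uref_upd_neg : ∀ k ∈ Icc 1 K, ∀ h ∈ Icc 1 M.H,
    ¬(1 < V (k + 1) h (st k h) - VLCB (k + 1) h (st k h)) → ¬uref (k + 1) h (st k h)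
  uref_upd_other : ∀ k ∈ Icc 1 K, ∀ h ∈ Icc 1 M.H, ∀ s, s ≠ st k h →
    (uref (k + 1) h s ↔ uref k h s)
  kvis_spec : ∀ h ∈ Icc 1 M.H, ∀ s a n, 1 ≤ n → n ≤ N K h s a →
    kvis n h s a ∈ Icc 1 K ∧ N (kvis n h s a) h s a = n ∧
      st (kvis n h s a) h = s ∧ ac (kvis n h s a) h = a


/-! ### Learning-rate weights -/

noncomputable def ew (H : ℕ) : ℕ → ℕ → ℝ
  | 0, _ => 0
  | (N + 1), n => if n = N + 1 then lr H (N + 1) else (1 - lr H (N + 1)) * ew H N n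

noncomputable def cw (H : ℕ) : ℕ → ℕ → ℝ
  | 0, _ => 0
  | (N + 1), n => (1 - lr H (N + 1)) * cw H N n
      + lr H (N + 1) * (if n ≤ N + 1 then 1 / ((N : ℝ) + 1) else 0)

noncomputable def uw (N n : ℕ) : ℝ := if n ≤ N then 1 / (N : ℝ) else 0

lemma lr_nonneg (H n : ℕ) : 0 ≤ lr H n := by unfold lr; positivity

lemma one_sub_lr (H N : ℕ) : 1 - lr H (N + 1) = (N : ℝ) / (H + (N + 1)) := by
  unfold lr
  have : (H : ℝ) + (N + 1) ≠ 0 := by positivity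
  push_cast
  field_simp
  ring

lemma one_sub_lr_nonneg (H N : ℕ) : 0 ≤ 1 - lr H (N + 1) := by
  rw [one_sub_lr]; positivity

lemma lr_one (H : ℕ) : lr H 1 = 1 := by
  unfold lr
  have : (H : ℝ) + 1 ≠ 0 := by positivity
  push_cast
  field_simp

lemma ew_nonneg (H N n : ℕ) : 0 ≤ ew H N n := by
  induction N with
  | zero => simp [ew]
  | succ N ih =>
    simp only [ew]
    split_ifs
    · exact lr_nonneg _ _
    · exact mul_nonneg (one_sub_lr_nonneg _ _) ih

lemma ew_zero_of_lt (H N n : ℕ) (h : N < n) : ew H N n = 0 := by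
  induction N with
  | zero => simp [ew]
  | succ N ih =>
    simp only [ew]
    rw [if_neg (by omega), ih (by omega), mul_zero]

lemma ew_le (H N n : ℕ) (hH : 1 ≤ H) (hN : 1 ≤ N) : ew H N n ≤ 2 * H / N := by
  have hH' : (1 : ℝ) ≤ H := by exact_mod_cast hH
  induction N with
  | zero => omega
  | succ N ih =>
    simp only [ew]
    split_ifs
    · unfold lr
      push_cast
      rw [div_le_div_iff₀ (by positivity) (by positivity)]
      have : (0 : ℝ) ≤ N := by positivity
      nlinarith
    · rcases Nat.eq_zero_or_pos N with h0 | h0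
      · subst h0; simp [ew]
      · have h1 := ih h0
        have hNp : (0 : ℝ) < N := by exact_mod_cast h0
        rw [one_sub_lr]
        calc (N : ℝ) / (H + (N + 1)) * ew H N n ≤ (N : ℝ) / (H + (N + 1)) * (2 * H / N) := by gcongr
          _ = 2 * H / (H + (N + 1)) := by field_simp
          _ ≤ 2 * H / ((N + 1 : ℕ) : ℝ) := by
            push_cast
            exact div_le_div_of_nonneg_left (by positivity) (by positivity) (by linarith)

lemma cw_nonneg (H N n : ℕ) : 0 ≤ cw H N n := by
  induction N with
  | zero => simp [cw]
  | succ N ih =>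
    simp only [cw]
    have := one_sub_lr_nonneg H N
    have := lr_nonneg H (N+1)
    split_ifs <;> positivity

lemma cw_zero_of_lt (H N n : ℕ) (h : N < n) : cw H N n = 0 := by
  induction N with
  | zero => simp [cw]
  | succ N ih =>
    simp only [cw]
    rw [if_neg (by omega), ih (by omega), mul_zero, mul_zero, add_zero]

lemma cw_le (H N n : ℕ) (hH : 1 ≤ H) (hN : 1 ≤ N) : cw H N n ≤ 2 / N := by
  have hH' : (1 : ℝ) ≤ H := by exact_mod_cast hH
  induction N with
  | zero => omega
  | succ N ih =>
    have h2 : cw H (N + 1) n ≤ (1 - lr H (N + 1)) * cw H N n + lr H (N + 1) * (1 / ((N : ℝ) + 1)) := by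
      simp only [cw]
      have := lr_nonneg H (N+1)
      gcongr
      split_ifs
      · exact le_rfl
      · positivity
    refine h2.trans ?_
    have h3 : (1 - lr H (N + 1)) * cw H N n ≤ 2 / (H + (N + 1)) := by
      rcases Nat.eq_zero_or_pos N with h0 | h0
      · subst h0; simp [cw]; positivity
      · have h1 := ih h0
        have hNp : (0 : ℝ) < N := by exact_mod_cast h0
        rw [one_sub_lr]
        calc (N : ℝ) / (H + (N + 1)) * cw H N n ≤ (N : ℝ) / (H + (N + 1)) * (2 / N) := by gcongr
          _ = 2 / (H + (N + 1)) := by field_simp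
    have h4 : (2 : ℝ) / (H + (N + 1)) + lr H (N + 1) * (1 / ((N : ℝ) + 1)) ≤ 2 / ((N + 1 : ℕ) : ℝ) := by
      unfold lr
      push_cast
      rw [div_mul_div_comm, div_add_div _ _ (by positivity) (by positivity),
        div_le_div_iff₀ (by positivity) (by positivity)]
      have hN0 : (0 : ℝ) ≤ N := by positivity
      have : 0 ≤ ((H:ℝ) - 1) * ((H + (N + 1)) * (N+1)) := mul_nonneg (by linarith) (by positivity)
      nlinarith
    linarith

lemma uw_nonneg (N n : ℕ) : 0 ≤ uw N n := by unfold uw; split_ifs <;> positivity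
lemma uw_zero_of_lt (N n : ℕ) (h : N < n) : uw N n = 0 := by unfold uw; rw [if_neg (by omega)]
lemma uw_le (N n : ℕ) : uw N n ≤ 2 / N := by
  unfold uw; split_ifs
  · gcongr; norm_num
  · positivity

/-! ### Weighted sums along visits -/

def cnt (vis : ℕ → Prop) [DecidablePred vis] : ℕ → ℕ
  | 0 => 0
  | (k + 1) => cnt vis k + if vis (k + 1) then 1 else 0

noncomputable def ws (vis : ℕ → Prop) [DecidablePred vis] (w y : ℕ → ℝ) (k : ℕ) : ℝ :=
  ∑ i ∈ Icc 1 k, if vis i then w (cnt vis i) * y i else 0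

section WS
variable (vis : ℕ → Prop) [DecidablePred vis]

lemma cnt_mono : Monotone (cnt vis) := by
  apply monotone_nat_of_le_succ
  intro n; simp [cnt]

lemma cnt_le (k : ℕ) : cnt vis k ≤ k := by
  induction k with
  | zero => simp [cnt]
  | succ k ih => simp only [cnt]; split_ifs <;> omega

lemma cnt_pos_of_vis {i : ℕ} (hi : 1 ≤ i) (h : vis i) : 1 ≤ cnt vis i := by
  obtain ⟨j, rfl⟩ : ∃ j, i = j + 1 := ⟨i - 1, by omega⟩
  simp [cnt, h]

lemma ws_zero (w y : ℕ → ℝ) : ws vis w y 0 = 0 := by simp [ws]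

lemma ws_succ (w y : ℕ → ℝ) (k : ℕ) : ws vis w y (k + 1) =
    ws vis w y k + if vis (k + 1) then w (cnt vis (k + 1)) * y (k + 1) else 0 := by
  unfold ws
  rw [Finset.sum_Icc_succ_top (by omega)]

lemma ws_congr {w w' y y' : ℕ → ℝ} {k : ℕ}
    (h : ∀ i ∈ Icc 1 k, vis i → w (cnt vis i) * y i = w' (cnt vis i) * y' i) :
    ws vis w y k = ws vis w' y' k := by
  unfold ws
  apply Finset.sum_congr rfl
  intro i hi
  split_ifs with hv
  · exact h i hi hv
  · rfl

lemma ws_mono {w w' y y' : ℕ → ℝ} {k : ℕ}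
    (h : ∀ i ∈ Icc 1 k, vis i → w (cnt vis i) * y i ≤ w' (cnt vis i) * y' i) :
    ws vis w y k ≤ ws vis w' y' k := by
  unfold ws
  apply Finset.sum_le_sum
  intro i hi
  split_ifs with hv
  · exact h i hi hv
  · rfl

lemma ws_nonneg {w y : ℕ → ℝ} {k : ℕ}
    (h : ∀ i ∈ Icc 1 k, vis i → 0 ≤ w (cnt vis i) * y i) :
    0 ≤ ws vis w y k := by
  unfold ws
  apply Finset.sum_nonneg
  intro i hi
  split_ifs with hv
  · exact h i hi hv
  · rfl

lemma ws_add (w y y' : ℕ → ℝ) (k : ℕ) :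
    ws vis w (fun i => y i + y' i) k = ws vis w y k + ws vis w y' k := by
  unfold ws
  rw [← Finset.sum_add_distrib]
  apply Finset.sum_congr rfl
  intro i hi
  split_ifs <;> ring

lemma ws_sub (w y y' : ℕ → ℝ) (k : ℕ) :
    ws vis w (fun i => y i - y' i) k = ws vis w y k - ws vis w y' k := by
  unfold ws
  rw [← Finset.sum_sub_distrib]
  apply Finset.sum_congr rfl
  intro i hi
  split_ifs <;> ring

lemma ws_smul (w y : ℕ → ℝ) (c : ℝ) (k : ℕ) :
    ws vis w (fun i => c * y i) k = c * ws vis w y k := by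
  unfold ws
  rw [Finset.mul_sum]
  apply Finset.sum_congr rfl
  intro i hi
  split_ifs <;> ring

lemma ws_smul_w (w y : ℕ → ℝ) (c : ℝ) (k : ℕ) :
    ws vis (fun i => c * w i) y k = c * ws vis w y k := by
  unfold ws
  rw [Finset.mul_sum]
  apply Finset.sum_congr rfl
  intro i hi
  split_ifs <;> ring

/-- extension to the final episode when the weights vanish beyond `cnt k` -/
lemma ws_extend (w y : ℕ → ℝ) {k K : ℕ} (hk : k ≤ K) (hw : ∀ n, cnt vis k < n → w n = 0) :
    ws vis w y K = ws vis w y k := by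
  induction K, hk using Nat.le_induction with
  | base => rfl
  | succ K hK ih =>
    rw [ws_succ, ih]
    split_ifs with hv
    · rw [hw _ ?_]; · ring
      have := cnt_mono vis hK
      simp only [cnt, hv, if_true]; omega
    · ring

lemma ew_ws_succ (H : ℕ) (y : ℕ → ℝ) (k : ℕ) :
    ws vis (ew H (cnt vis (k + 1))) y (k + 1) =
      if vis (k + 1) then (1 - lr H (cnt vis (k + 1))) * ws vis (ew H (cnt vis k)) y k
        + lr H (cnt vis (k + 1)) * y (k + 1)
      else ws vis (ew H (cnt vis k)) y k := by
  rw [ws_succ]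
  by_cases hv : vis (k + 1)
  · have hc : cnt vis (k + 1) = cnt vis k + 1 := by simp [cnt, hv]
    simp only [hv, if_true, hc]
    congr 1
    · rw [← ws_smul_w]
      apply ws_congr
      intro i hi _
      have h1 : cnt vis i ≤ cnt vis k := cnt_mono vis (Finset.mem_Icc.1 hi).2
      simp only [ew]
      rw [if_neg (by omega)]
    · simp [ew]
  · have hc : cnt vis (k + 1) = cnt vis k := by simp [cnt, hv]
    simp [hv, hc]

lemma uw_ws_succ (y : ℕ → ℝ) (k : ℕ) :
    ws vis (uw (cnt vis (k + 1))) y (k + 1) =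
      if vis (k + 1) then (1 - 1 / (cnt vis (k + 1) : ℝ)) * ws vis (uw (cnt vis k)) y k
        + 1 / (cnt vis (k + 1) : ℝ) * y (k + 1)
      else ws vis (uw (cnt vis k)) y k := by
  rw [ws_succ]
  by_cases hv : vis (k + 1)
  · have hc : cnt vis (k + 1) = cnt vis k + 1 := by simp [cnt, hv]
    simp only [hv, if_true, hc]
    congr 1
    · rw [← ws_smul_w]
      apply ws_congr
      intro i hi hvi
      have h1 : cnt vis i ≤ cnt vis k := cnt_mono vis (Finset.mem_Icc.1 hi).2
      have h2 := cnt_pos_of_vis vis (Finset.mem_Icc.1 hi).1 hvi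
      have h3 : (0 : ℝ) < cnt vis k := by exact_mod_cast (by omega : 0 < cnt vis k)
      simp only [uw]
      rw [if_pos (by omega), if_pos (by omega)]
      push_cast
      field_simp
      ring
    · simp [uw]
  · have hc : cnt vis (k + 1) = cnt vis k := by simp [cnt, hv]
    simp [hv, hc]

lemma cw_ws_succ (H : ℕ) (y : ℕ → ℝ) (k : ℕ) :
    ws vis (cw H (cnt vis (k + 1))) y (k + 1) =
      if vis (k + 1) then (1 - lr H (cnt vis (k + 1))) * ws vis (cw H (cnt vis k)) y k
        + lr H (cnt vis (k + 1)) * ws vis (uw (cnt vis (k + 1))) y (k + 1)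
      else ws vis (cw H (cnt vis k)) y k := by
  by_cases hv : vis (k + 1)
  · have hc : cnt vis (k + 1) = cnt vis k + 1 := by simp [cnt, hv]
    simp only [hv, if_true]
    have h0 : ws vis (cw H (cnt vis k)) y k = ws vis (cw H (cnt vis k)) y (k + 1) :=
      (ws_extend vis _ _ (Nat.le_succ k) (fun n hn => cw_zero_of_lt _ _ _ hn)).symm
    rw [h0, ← ws_smul_w, ← ws_smul_w]
    unfold ws
    rw [← Finset.sum_add_distrib]
    apply Finset.sum_congr rfl
    intro i hi
    have h1 : cnt vis i ≤ cnt vis (k+1) := cnt_mono vis (Finset.mem_Icc.1 hi).2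
    split_ifs with hvi
    · rw [hc] at h1 ⊢
      simp only [cw, uw, if_pos h1]
      push_cast
      ring
    · ring
  · have hc : cnt vis (k + 1) = cnt vis k := by simp [cnt, hv]
    rw [ws_succ]
    simp [hv, hc]

lemma ws_of_cnt_zero (w y : ℕ → ℝ) (k : ℕ) (h : cnt vis k = 0) : ws vis w y k = 0 := by
  unfold ws
  apply Finset.sum_eq_zero
  intro i hi
  rw [if_neg]
  intro hv
  have h1 : cnt vis i ≤ cnt vis k := cnt_mono vis (Finset.mem_Icc.1 hi).2
  have h2 := cnt_pos_of_vis vis (Finset.mem_Icc.1 hi).1 hv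
  omega

lemma ew_ws_one (H k : ℕ) (c : ℝ) (h : 1 ≤ cnt vis k) :
    ws vis (ew H (cnt vis k)) (fun _ => c) k = c := by
  induction k with
  | zero => simp [cnt] at h
  | succ k ih =>
    rw [ew_ws_succ]
    split_ifs with hv
    · have hc : cnt vis (k + 1) = cnt vis k + 1 := by simp [cnt, hv]
      rcases Nat.eq_zero_or_pos (cnt vis k) with h0 | h0
      · rw [ws_of_cnt_zero vis _ _ _ h0, hc, h0, zero_add, lr_one]; ring
      · rw [ih h0]; ring
    · have hc : cnt vis (k + 1) = cnt vis k := by simp [cnt, hv]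
      exact ih (hc ▸ h)

lemma uw_ws_one (k : ℕ) (c : ℝ) (h : 1 ≤ cnt vis k) :
    ws vis (uw (cnt vis k)) (fun _ => c) k = c := by
  induction k with
  | zero => simp [cnt] at h
  | succ k ih =>
    rw [uw_ws_succ]
    split_ifs with hv
    · have hc : cnt vis (k + 1) = cnt vis k + 1 := by simp [cnt, hv]
      rcases Nat.eq_zero_or_pos (cnt vis k) with h0 | h0
      · rw [ws_of_cnt_zero vis _ _ _ h0, hc, h0, zero_add]; norm_num
      · rw [ih h0]; ring
    · have hc : cnt vis (k + 1) = cnt vis k := by simp [cnt, hv]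
      exact ih (hc ▸ h)

/-- For non-increasing `y`, running averages dominate current values. -/
lemma cw_ge_ew (H : ℕ) (y : ℕ → ℝ) (k : ℕ) (hy : ∀ i j, 1 ≤ i → i ≤ j → j ≤ k → y j ≤ y i) :
    ws vis (ew H (cnt vis k)) y k ≤ ws vis (cw H (cnt vis k)) y k := by
  induction k with
  | zero => simp [ws_zero]
  | succ k ih =>
    rw [ew_ws_succ, cw_ws_succ]
    have ih' := ih (fun i j hi hij hj => hy i j hi hij (by omega))
    split_ifs with hv
    · have hc : cnt vis (k + 1) = cnt vis k + 1 := by simp [cnt, hv]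
      have h1 : y (k + 1) ≤ ws vis (uw (cnt vis (k + 1))) y (k + 1) := by
        calc y (k + 1) = ws vis (uw (cnt vis (k + 1))) (fun _ => y (k + 1)) (k + 1) :=
              (uw_ws_one vis (k + 1) _ (by omega)).symm
          _ ≤ _ := by
              apply ws_mono
              intro i hi _
              have := Finset.mem_Icc.1 hi
              exact mul_le_mul_of_nonneg_left (hy i (k+1) this.1 this.2 le_rfl) (uw_nonneg _ _)
      have h2 : 0 ≤ 1 - lr H (cnt vis (k+1)) := by rw [hc]; exact one_sub_lr_nonneg _ _
      have h3 := lr_nonneg H (cnt vis (k + 1))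
      gcongr
    · exact ih'

/-- number of terms bound -/
lemma ws_le_card (w y : ℕ → ℝ) (k : ℕ) (b : ℝ)
    (hb : ∀ i ∈ Icc 1 k, vis i → w (cnt vis i) * y i ≤ b) :
    ws vis w y k ≤ cnt vis k * b := by
  induction k with
  | zero => simp [ws_zero, cnt]
  | succ k ih =>
    rw [ws_succ]
    have ih' := ih (fun i hi => hb i (by simp at hi ⊢; omega))
    simp only [cnt]
    split_ifs with hv
    · have := hb (k + 1) (by simp) hv
      simp only [cnt, hv, if_true] at this
      push_cast at this ⊢; linarith
    · simpa using ih'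

end WS

/-! ### Exponential supermartingale -/

lemma exp_var_bound {S : Type} [Fintype S] (p g : S → ℝ) (hp : ∀ s, 0 ≤ p s) (hp1 : ∑ s, p s = 1)
    (hg : ∀ s, |g s| ≤ 1 / 2) :
    ∑ s, p s * Real.exp (g s - ∑ t, p t * g t - (∑ t, p t * g t ^ 2 - (∑ t, p t * g t) ^ 2)) ≤ 1 := by
  set m := ∑ t, p t * g t with hm
  set v := ∑ t, p t * g t ^ 2 - m ^ 2 with hv
  have hmb : |m| ≤ 1 / 2 := by
    calc |m| ≤ ∑ t, |p t * g t| := Finset.abs_sum_le_sum_abs _ _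
      _ ≤ ∑ t, p t * (1 / 2) := by
          apply Finset.sum_le_sum
          intro t _
          rw [abs_mul, abs_of_nonneg (hp t)]
          exact mul_le_mul_of_nonneg_left (hg t) (hp t)
      _ = 1 / 2 := by rw [← Finset.sum_mul, hp1, one_mul]
  have h1 : ∀ s, Real.exp (g s - m) ≤ 1 + (g s - m) + (g s - m) ^ 2 := by
    intro s
    have hb : |g s - m| ≤ 1 := by
      have := abs_sub (g s) m
      have := hg s
      linarith
    have := (abs_le.1 (Real.abs_exp_sub_one_sub_id_le hb)).2
    linarith
  have h2 : ∑ s, p s * Real.exp (g s - m) ≤ 1 + v := by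
    calc ∑ s, p s * Real.exp (g s - m) ≤ ∑ s, p s * (1 + (g s - m) + (g s - m) ^ 2) :=
          Finset.sum_le_sum fun s _ => mul_le_mul_of_nonneg_left (h1 s) (hp s)
      _ = ∑ s, ((1 - m + m ^ 2) * p s + (1 - 2 * m) * (p s * g s) + p s * g s ^ 2) := by
          apply Finset.sum_congr rfl; intro s _; ring
      _ = 1 + v := by
          rw [Finset.sum_add_distrib, Finset.sum_add_distrib, ← Finset.mul_sum, ← Finset.mul_sum,
            hp1, ← hm, hv]
          ring
  have h3 : ∀ s, p s * Real.exp (g s - m - v) = (p s * Real.exp (g s - m)) * Real.exp (-v) := by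
    intro s
    rw [mul_assoc, ← Real.exp_add]
    ring_nf
  simp_rw [h3]
  rw [← Finset.sum_mul]
  calc _ ≤ (1 + v) * Real.exp (-v) := mul_le_mul_of_nonneg_right h2 (Real.exp_pos _).le
    _ ≤ Real.exp v * Real.exp (-v) := by
        apply mul_le_mul_of_nonneg_right _ (Real.exp_pos _).le
        have := Real.add_one_le_exp v
        linarith
    _ = 1 := by rw [← Real.exp_add]; simp

lemma integral_mul_indicator {Ω S : Type} [DecidableEq S]
    [MeasurableSpace S] [MeasurableSingletonClass S]
    {m0 : MeasurableSpace Ω} (μ : Measure Ω) [IsProbabilityMeasure μ]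
    (G : MeasurableSpace Ω) (hG : G ≤ m0) (X : Ω → S) (hX : Measurable[m0] X) (s : S)
    (p Y : Ω → ℝ) (hY : Measurable[G] Y) (C : ℝ) (hYb : ∀ ω, |Y ω| ≤ C)
    (hcond : μ[(fun ω => if X ω = s then (1 : ℝ) else 0) | G] =ᵐ[μ] p) :
    ∫ ω, Y ω * (if X ω = s then (1 : ℝ) else 0) ∂μ = ∫ ω, Y ω * p ω ∂μ := by
  set I : Ω → ℝ := fun ω => if X ω = s then (1 : ℝ) else 0 with hI
  have hIm : Measurable[m0] I :=
    Measurable.ite (hX (measurableSet_singleton s)) measurable_const measurable_const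
  have hIi : Integrable I μ := by
    apply Integrable.of_bound hIm.aestronglyMeasurable 1
    filter_upwards with ω
    simp only [hI]; split_ifs <;> simp
  have hYI : Integrable (Y * I) μ := by
    apply Integrable.of_bound ((hY.mono hG le_rfl).mul hIm).aestronglyMeasurable C
    filter_upwards with ω
    have h1 := hYb ω
    have h2 := abs_nonneg (Y ω)
    simp only [Pi.mul_apply, hI, Real.norm_eq_abs]; split_ifs
    · simpa using h1
    · simp; linarith
  have h1 := condExp_mul_of_stronglyMeasurable_left (μ := μ) hY.stronglyMeasurable hYI hIi
  calc ∫ ω, Y ω * I ω ∂μ = ∫ ω, (Y * I) ω ∂μ := rfl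
    _ = ∫ ω, (μ[Y * I | G]) ω ∂μ := (integral_condExp hG).symm
    _ = ∫ ω, Y ω * p ω ∂μ := by
      apply integral_congr_ae
      filter_upwards [h1, hcond] with ω h1 h2
      rw [h1, Pi.mul_apply, h2]

lemma exp_supermart {Ω S : Type} [Fintype S] [DecidableEq S]
    [MeasurableSpace S] [MeasurableSingletonClass S]
    {m0 : MeasurableSpace Ω} (μ : Measure Ω) [IsProbabilityMeasure μ] (K : ℕ)
    (G : ℕ → MeasurableSpace Ω) (hG : ∀ k, G k ≤ m0) (hGm : ∀ k, 1 ≤ k → G k ≤ G (k + 1))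
    (X : ℕ → Ω → S) (p g : ℕ → Ω → S → ℝ)
    (hX : ∀ k ∈ Icc 1 K, Measurable[G (k + 1)] (X k))
    (hpm : ∀ k ∈ Icc 1 K, ∀ s, Measurable[G k] (fun ω => p k ω s))
    (hp0 : ∀ k ∈ Icc 1 K, ∀ ω s, 0 ≤ p k ω s) (hp1 : ∀ k ∈ Icc 1 K, ∀ ω, ∑ s, p k ω s = 1)
    (hcond : ∀ k ∈ Icc 1 K, ∀ s,
      μ[(fun ω => if X k ω = s then (1 : ℝ) else 0) | G k] =ᵐ[μ] fun ω => p k ω s)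
    (hgm : ∀ k ∈ Icc 1 K, ∀ s, Measurable[G k] (fun ω => g k ω s))
    (hgb : ∀ k ∈ Icc 1 K, ∀ ω s, |g k ω s| ≤ 1 / 2) (n : ℕ) (hn : n ≤ K) :
    Measurable[G (n + 1)] (fun ω => Real.exp (∑ i ∈ Icc 1 n, (g i ω (X i ω) - ∑ t, p i ω t * g i ω t
      - (∑ t, p i ω t * g i ω t ^ 2 - (∑ t, p i ω t * g i ω t) ^ 2)))) ∧
    (∃ C, ∀ ω, Real.exp (∑ i ∈ Icc 1 n, (g i ω (X i ω) - ∑ t, p i ω t * g i ω t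
      - (∑ t, p i ω t * g i ω t ^ 2 - (∑ t, p i ω t * g i ω t) ^ 2))) ≤ C) ∧
    ∫ ω, Real.exp (∑ i ∈ Icc 1 n, (g i ω (X i ω) - ∑ t, p i ω t * g i ω t
      - (∑ t, p i ω t * g i ω t ^ 2 - (∑ t, p i ω t * g i ω t) ^ 2))) ∂μ ≤ 1 := by
  induction n with
  | zero => 
    refine ⟨?_, ⟨1, ?_⟩, ?_⟩ <;> simp
  | succ n ih =>
    obtain ⟨ihm, ⟨C, hC⟩, ihi⟩ := ih (by omega)
    have hk : n + 1 ∈ Icc 1 K := by simp; omega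
    set Z : Ω → ℝ := fun ω => Real.exp (∑ i ∈ Icc 1 n, (g i ω (X i ω) - ∑ t, p i ω t * g i ω t
      - (∑ t, p i ω t * g i ω t ^ 2 - (∑ t, p i ω t * g i ω t) ^ 2))) with hZ
    set φ : S → Ω → ℝ := fun s ω => Real.exp (g (n+1) ω s - ∑ t, p (n+1) ω t * g (n+1) ω t
      - (∑ t, p (n+1) ω t * g (n+1) ω t ^ 2 - (∑ t, p (n+1) ω t * g (n+1) ω t) ^ 2)) with hφ
    have hsum : ∀ ω, Real.exp (∑ i ∈ Icc 1 (n+1), (g i ω (X i ω) - ∑ t, p i ω t * g i ω t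
      - (∑ t, p i ω t * g i ω t ^ 2 - (∑ t, p i ω t * g i ω t) ^ 2))) =
        ∑ s, (Z ω * φ s ω) * (if X (n+1) ω = s then (1:ℝ) else 0) := by
      intro ω
      rw [Finset.sum_Icc_succ_top (by omega), Real.exp_add]
      simp [hZ, hφ]
    have hφm : ∀ s, Measurable[G (n+1)] (φ s) := by
      intro s
      have a1 := hgm _ hk
      have a2 := hpm _ hk
      have hmean : Measurable[G (n+1)] (fun ω => ∑ t, p (n+1) ω t * g (n+1) ω t) :=
        Finset.measurable_fun_sum _ fun t _ => (a2 t).mul (a1 t)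
      have hmean2 : Measurable[G (n+1)] (fun ω => ∑ t, p (n+1) ω t * g (n+1) ω t ^ 2) :=
        Finset.measurable_fun_sum _ fun t _ => (a2 t).mul ((a1 t).pow_const 2)
      exact Real.measurable_exp.comp (((a1 s).sub hmean).sub (hmean2.sub (hmean.pow_const 2)))
    have hφb : ∀ s ω, φ s ω ≤ Real.exp 2 := by
      intro s ω
      simp only [hφ]
      apply Real.exp_le_exp.2
      have hpp := hp0 _ hk ω
      have hb := hgb _ hk ω
      have e1 : |∑ t, p (n+1) ω t * g (n+1) ω t| ≤ 1 / 2 := by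
        calc _ ≤ ∑ t, |p (n+1) ω t * g (n+1) ω t| := Finset.abs_sum_le_sum_abs _ _
          _ ≤ ∑ t, p (n+1) ω t * (1 / 2) := by
            apply Finset.sum_le_sum
            intro t _
            rw [abs_mul, abs_of_nonneg (hpp t)]
            exact mul_le_mul_of_nonneg_left (hb t) (hpp t)
          _ = 1 / 2 := by rw [← Finset.sum_mul, hp1 _ hk, one_mul]
      have e2 : 0 ≤ ∑ t, p (n+1) ω t * g (n+1) ω t ^ 2 :=
        Finset.sum_nonneg fun t _ => mul_nonneg (hpp t) (sq_nonneg _)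
      have e3 := abs_le.1 (hb s)
      have e4 := abs_le.1 e1
      nlinarith
    have hZφb : ∀ s ω, |Z ω * φ s ω| ≤ C * Real.exp 2 := by
      intro s ω
      have z0 : 0 ≤ Z ω := (Real.exp_pos _).le
      have f0 : 0 ≤ φ s ω := (Real.exp_pos _).le
      rw [abs_of_nonneg (mul_nonneg z0 f0)]
      exact mul_le_mul (hC ω) (hφb s ω) f0 (z0.trans (hC ω))
    have hZφm : ∀ s, Measurable[G (n+1)] (fun ω => Z ω * φ s ω) := fun s => ihm.mul (hφm s)
    have hXm := hX _ hk
    have hIm : ∀ s, Measurable[G (n+1+1)] (fun ω => if X (n+1) ω = s then (1:ℝ) else 0) := fun s =>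
      Measurable.ite (hXm (measurableSet_singleton s)) measurable_const measurable_const
    have hG12 := hGm (n+1) (by omega)
    refine ⟨?_, ⟨∑ s : S, C * Real.exp 2, ?_⟩, ?_⟩
    · simp_rw [hsum]
      exact Finset.measurable_fun_sum _ fun s _ => ((hZφm s).mono hG12 le_rfl).mul (hIm s)
    · intro ω
      rw [hsum]
      apply Finset.sum_le_sum
      intro s _
      have := hZφb s ω
      have h5 := (abs_nonneg _).trans this
      split_ifs
      · rw [mul_one]; exact (le_abs_self _).trans this
      · rw [mul_zero]; exact h5
    · simp_rw [hsum]
      have hint : ∀ s, Integrable (fun ω => (Z ω * φ s ω) * (if X (n+1) ω = s then (1:ℝ) else 0)) μ := by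
        intro s
        apply Integrable.of_bound
          ((((hZφm s).mono (hG _) le_rfl).mul ((hIm s).mono (hG _) le_rfl)).aestronglyMeasurable) (C * Real.exp 2)
        filter_upwards with ω
        have := hZφb s ω
        have h5 := (abs_nonneg _).trans this
        rw [Real.norm_eq_abs, Pi.mul_apply]
        split_ifs
        · rwa [mul_one]
        · simpa using h5
      have hp1' : ∀ s ω, p (n+1) ω s ≤ 1 := by
        intro s ω
        rw [← hp1 _ hk ω]
        exact Finset.single_le_sum (fun t _ => hp0 _ hk ω t) (Finset.mem_univ s)
      have hint2 : ∀ s, Integrable (fun ω => (Z ω * φ s ω) * p (n+1) ω s) μ := by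
        intro s
        apply Integrable.of_bound
          ((((hZφm s).mono (hG _) le_rfl).mul ((hpm _ hk s).mono (hG _) le_rfl)).aestronglyMeasurable) (C * Real.exp 2)
        filter_upwards with ω
        have := hZφb s ω
        have h5 := (abs_nonneg _).trans this
        rw [Real.norm_eq_abs, Pi.mul_apply, abs_mul, abs_of_nonneg (hp0 _ hk ω s)]
        calc _ ≤ (C * Real.exp 2) * 1 := mul_le_mul this (hp1' s ω) (hp0 _ hk ω s) h5
          _ = _ := mul_one _
      rw [integral_finsetSum _ (fun s _ => hint s)]
      have heq : ∀ s, ∫ ω, (Z ω * φ s ω) * (if X (n+1) ω = s then (1:ℝ) else 0) ∂μ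
          = ∫ ω, (Z ω * φ s ω) * p (n+1) ω s ∂μ := fun s =>
        integral_mul_indicator μ (G (n+1)) (hG _) (X (n+1)) (hXm.mono (hG _) le_rfl) s _ _
          (hZφm s) _ (hZφb s) (hcond _ hk s)
      simp_rw [heq]
      rw [← integral_finsetSum _ (fun s _ => hint2 s)]
      refine le_trans (integral_mono (integrable_finsetSum _ fun s _ => hint2 s) (g := Z) ?_ ?_) ihi
      · apply Integrable.of_bound ((ihm.mono (hG _) le_rfl).aestronglyMeasurable) C
        filter_upwards with ω
        rw [Real.norm_eq_abs, abs_of_nonneg (Real.exp_pos _).le]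
        exact hC ω
      · intro ω
        have := exp_var_bound (p (n+1) ω) (g (n+1) ω) (hp0 _ hk ω) (hp1 _ hk ω) (hgb _ hk ω)
        have z0 : 0 ≤ Z ω := (Real.exp_pos _).le
        calc ∑ s, (Z ω * φ s ω) * p (n+1) ω s = Z ω * ∑ s, p (n+1) ω s * φ s ω := by
              rw [Finset.mul_sum]; apply Finset.sum_congr rfl; intro s _; ring
          _ ≤ Z ω * 1 := mul_le_mul_of_nonneg_left this z0
          _ = Z ω := mul_one _

lemma freedman_tail {Ω S : Type} [Fintype S] [DecidableEq S]
    [MeasurableSpace S] [MeasurableSingletonClass S]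
    {m0 : MeasurableSpace Ω} (μ : Measure Ω) [IsProbabilityMeasure μ] (K : ℕ)
    (G : ℕ → MeasurableSpace Ω) (hG : ∀ k, G k ≤ m0) (hGm : ∀ k, 1 ≤ k → G k ≤ G (k + 1))
    (X : ℕ → Ω → S) (p g : ℕ → Ω → S → ℝ)
    (hX : ∀ k ∈ Icc 1 K, Measurable[G (k + 1)] (X k))
    (hpm : ∀ k ∈ Icc 1 K, ∀ s, Measurable[G k] (fun ω => p k ω s))
    (hp0 : ∀ k ∈ Icc 1 K, ∀ ω s, 0 ≤ p k ω s) (hp1 : ∀ k ∈ Icc 1 K, ∀ ω, ∑ s, p k ω s = 1)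
    (hcond : ∀ k ∈ Icc 1 K, ∀ s,
      μ[(fun ω => if X k ω = s then (1 : ℝ) else 0) | G k] =ᵐ[μ] fun ω => p k ω s)
    (hgm : ∀ k ∈ Icc 1 K, ∀ s, Measurable[G k] (fun ω => g k ω s))
    (hgb : ∀ k ∈ Icc 1 K, ∀ ω s, |g k ω s| ≤ 1 / 2) (x : ℝ) :
    μ {ω | x ≤ ∑ i ∈ Icc 1 K, (g i ω (X i ω) - ∑ t, p i ω t * g i ω t
      - (∑ t, p i ω t * g i ω t ^ 2 - (∑ t, p i ω t * g i ω t) ^ 2))} ≤ ENNReal.ofReal (Real.exp (-x)) := by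
  obtain ⟨hm, ⟨C, hC⟩, hi⟩ := exp_supermart μ K G hG hGm X p g hX hpm hp0 hp1 hcond hgm hgb K le_rfl
  set Y : Ω → ℝ := fun ω => ∑ i ∈ Icc 1 K, (g i ω (X i ω) - ∑ t, p i ω t * g i ω t
      - (∑ t, p i ω t * g i ω t ^ 2 - (∑ t, p i ω t * g i ω t) ^ 2)) with hY
  have hint : Integrable (fun ω => Real.exp (Y ω)) μ := by
    apply Integrable.of_bound ((hm.mono (hG _) le_rfl).aestronglyMeasurable) C
    filter_upwards with ω
    rw [Real.norm_eq_abs, abs_of_nonneg (Real.exp_pos _).le]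
    exact hC ω
  have h1 := mul_meas_ge_le_integral_of_nonneg (μ := μ)
    (Filter.Eventually.of_forall fun ω => (Real.exp_pos (Y ω)).le) hint (Real.exp x)
  have h2 : {ω | x ≤ Y ω} = {ω | Real.exp x ≤ Real.exp (Y ω)} := by
    ext ω; simp
  rw [h2, ← ofReal_measureReal]
  apply ENNReal.ofReal_le_ofReal
  rw [Real.exp_neg, ← one_div, le_div_iff₀ (Real.exp_pos _), mul_comm]
  exact h1.trans hi

/-! ### The algorithm is determined by the trajectory -/

section Determ
variable {S A : Type} [Fintype S] [Fintype A] [Nonempty S] [Nonempty A]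
    [DecidableEq S] [DecidableEq A] {M : MDP S A} {K : ℕ} {cb δ : ℝ}

/-- Agreement of all algorithm quantities at the beginning of episode `k`. -/
def AgreeAt (o o' : QLAlg M K cb δ) (k : ℕ) : Prop :=
  ∀ h ∈ Icc 1 M.H,
    (∀ s a, o.N (k - 1) h s a = o'.N (k - 1) h s a ∧ o.Q k h s a = o'.Q k h s a ∧
      o.QUCB k h s a = o'.QUCB k h s a ∧ o.QLCB k h s a = o'.QLCB k h s a ∧
      o.QR k h s a = o'.QR k h s a ∧ o.muRef k h s a = o'.muRef k h s a ∧
      o.sigRef k h s a = o'.sigRef k h s a ∧ o.muAdv k h s a = o'.muAdv k h s a ∧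
      o.sigAdv k h s a = o'.sigAdv k h s a ∧ o.BR k h s a = o'.BR k h s a ∧
      o.dR k h s a = o'.dR k h s a) ∧
    (∀ s, o.V k h s = o'.V k h s ∧ o.VLCB k h s = o'.VLCB k h s ∧ o.VR k h s = o'.VR k h s ∧
      (o.uref k h s ↔ o'.uref k h s))

lemma agree_step (o o' : QLAlg M K cb δ) (k : ℕ) (hk : k ∈ Icc 1 K) (hag : AgreeAt o o' k)
    (hst : ∀ h ∈ Icc 1 (M.H + 1), o.st k h = o'.st k h)
    (hac : ∀ h ∈ Icc 1 M.H, o.ac k h = o'.ac k h) : AgreeAt o o' (k + 1) := by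
  intro h hh
  have hh1 := Finset.mem_Icc.1 hh
  have hs1 : o.st k h = o'.st k h := hst h (by simp; omega)
  have hs2 : o.st k (h + 1) = o'.st k (h + 1) := hst (h + 1) (by simp; omega)
  have ha1 := hac h hh
  have hV : ∀ s, o.V k (h + 1) s = o'.V k (h + 1) s ∧ o.VLCB k (h + 1) s = o'.VLCB k (h + 1) s ∧
      o.VR k (h + 1) s = o'.VR k (h + 1) s := by
    intro s
    rcases Nat.lt_or_ge h M.H with hlt | hge
    · have := (hag (h + 1) (by simp; omega)).2 s
      exact ⟨this.1, this.2.1, this.2.2.1⟩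
    · have : h = M.H := by omega
      subst this
      obtain ⟨a, b, c⟩ := o.V_terminal k s
      obtain ⟨a', b', c'⟩ := o'.V_terminal k s
      exact ⟨a.trans a'.symm, c.trans c'.symm, b.trans b'.symm⟩
  have hV1 : o.V k (h + 1) = o'.V k (h + 1) := funext fun s => (hV s).1
  have hV2 : o.VLCB k (h + 1) = o'.VLCB k (h + 1) := funext fun s => (hV s).2.1
  have hV3 : o.VR k (h + 1) = o'.VR k (h + 1) := funext fun s => (hV s).2.2
  obtain ⟨hA, hB⟩ := hag h hh
  have hN : ∀ s a, o.N k h s a = o'.N k h s a := by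
    intro s a
    rw [o.N_upd k hk h hh, o'.N_upd k hk h hh, (hA s a).1, hs1, ha1]
  have hmr : ∀ s a, o.muRef (k+1) h s a = o'.muRef (k+1) h s a := by
    intro s a
    rw [o.muRef_upd k hk h hh, o'.muRef_upd k hk h hh, hs1, ha1, hN, hV3, hs2, (hA s a).2.2.2.2.2.1]
  have hsr : ∀ s a, o.sigRef (k+1) h s a = o'.sigRef (k+1) h s a := by
    intro s a
    rw [o.sigRef_upd k hk h hh, o'.sigRef_upd k hk h hh, hs1, ha1, hN, hV3, hs2,
      (hA s a).2.2.2.2.2.2.1]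
  have hma : ∀ s a, o.muAdv (k+1) h s a = o'.muAdv (k+1) h s a := by
    intro s a
    rw [o.muAdv_upd k hk h hh, o'.muAdv_upd k hk h hh, hs1, ha1, hN, hV3, hV1, hs2,
      (hA s a).2.2.2.2.2.2.2.1]
  have hsa : ∀ s a, o.sigAdv (k+1) h s a = o'.sigAdv (k+1) h s a := by
    intro s a
    rw [o.sigAdv_upd k hk h hh, o'.sigAdv_upd k hk h hh, hs1, ha1, hN, hV3, hV1, hs2,
      (hA s a).2.2.2.2.2.2.2.2.1]
  have hBR : ∀ s a, o.BR (k+1) h s a = o'.BR (k+1) h s a := by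
    intro s a
    rw [o.BR_upd k hk h hh, o'.BR_upd k hk h hh, hs1, ha1, hN, hmr, hsr, hma, hsa,
      (hA s a).2.2.2.2.2.2.2.2.2.1]
  have hdR : ∀ s a, o.dR (k+1) h s a = o'.dR (k+1) h s a := by
    intro s a
    rw [o.dR_upd k hk h hh, o'.dR_upd k hk h hh, hs1, ha1, hBR,
      (hA s a).2.2.2.2.2.2.2.2.2.1, (hA s a).2.2.2.2.2.2.2.2.2.2]
  have hbR : o.bR k h = o'.bR k h := by
    rw [o.bR_def k hk h hh, o'.bR_def k hk h hh, hs1, ha1, hBR, hN, hdR]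
  have hU : ∀ s a, o.QUCB (k+1) h s a = o'.QUCB (k+1) h s a := by
    intro s a
    rw [o.QUCB_upd k hk h hh, o'.QUCB_upd k hk h hh, hs1, ha1, hN, hV1, hs2, (hA s a).2.2.1]
  have hL : ∀ s a, o.QLCB (k+1) h s a = o'.QLCB (k+1) h s a := by
    intro s a
    rw [o.QLCB_upd k hk h hh, o'.QLCB_upd k hk h hh, hs1, ha1, hN, hV2, hs2, (hA s a).2.2.2.1]
  have hR : ∀ s a, o.QR (k+1) h s a = o'.QR (k+1) h s a := by
    intro s a
    rw [o.QR_upd k hk h hh, o'.QR_upd k hk h hh, hs1, ha1, hN, hV1, hV3, hs2, hmr, hbR,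
      (hA s a).2.2.2.2.1]
  have hQ : ∀ s a, o.Q (k+1) h s a = o'.Q (k+1) h s a := by
    intro s a
    rw [o.Q_upd k hk h hh, o'.Q_upd k hk h hh, hs1, ha1, hR, hU, (hA s a).2.1]
  have hVn : ∀ s, o.V (k+1) h s = o'.V (k+1) h s := by
    intro s
    rw [o.V_upd k hk h hh, o'.V_upd k hk h hh, hs1, (hB s).1]
    simp_rw [hQ]
  have hVLn : ∀ s, o.VLCB (k+1) h s = o'.VLCB (k+1) h s := by
    intro s
    rw [o.VLCB_upd k hk h hh, o'.VLCB_upd k hk h hh, hs1, (hB s).2.1]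
    simp_rw [hL]
  refine ⟨fun s a => ⟨?_, hQ s a, hU s a, hL s a, hR s a, hmr s a, hsr s a, hma s a, hsa s a,
    hBR s a, hdR s a⟩, fun s => ⟨hVn s, hVLn s, ?_, ?_⟩⟩
  · simpa using hN s a
  · by_cases hs : s = o.st k h
    · subst hs
      have e1 := o'.VR_upd_pos k hk h hh
      have e2 := o'.VR_upd_neg k hk h hh
      rw [← hs1, ← hVn, ← hVLn, ← (hB _).2.2.2, ← (hB _).2.2.1] at e2
      rw [← hs1, ← hVn, ← hVLn, ← (hB _).2.2.2] at e1
      by_cases hc : (1 < o.V (k + 1) h (o.st k h) - o.VLCB (k + 1) h (o.st k h) ∨ o.uref k h (o.st k h))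
      · rw [e1 hc, o.VR_upd_pos k hk h hh hc]
      · rw [e2 hc, o.VR_upd_neg k hk h hh hc]
    · rw [o.VR_upd_other k hk h hh s hs, o'.VR_upd_other k hk h hh s (hs1 ▸ hs), (hB s).2.2.1]
  · by_cases hs : s = o.st k h
    · subst hs
      have e1 := o'.uref_upd_pos k hk h hh
      have e2 := o'.uref_upd_neg k hk h hh
      rw [← hs1, ← hVn, ← hVLn] at e1 e2
      by_cases hc : 1 < o.V (k + 1) h (o.st k h) - o.VLCB (k + 1) h (o.st k h)
      · exact iff_of_true (o.uref_upd_pos k hk h hh hc) (e1 hc)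
      · exact iff_of_false (o.uref_upd_neg k hk h hh hc) (e2 hc)
    · rw [o.uref_upd_other k hk h hh s hs, o'.uref_upd_other k hk h hh s (hs1 ▸ hs), (hB s).2.2.2]

lemma agree_all (o o' : QLAlg M K cb δ) (k : ℕ) (hk1 : 1 ≤ k) (hk : k ≤ K + 1)
    (hst : ∀ i ∈ Icc 1 (k - 1), ∀ h ∈ Icc 1 (M.H + 1), o.st i h = o'.st i h)
    (hac : ∀ i ∈ Icc 1 (k - 1), ∀ h ∈ Icc 1 M.H, o.ac i h = o'.ac i h) : AgreeAt o o' k := by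
  induction k, hk1 using Nat.le_induction with
  | base =>
    intro h hh
    refine ⟨fun s a => ?_, fun s => ?_⟩
    · obtain ⟨m1, m2, m3, m4, m5, m6⟩ := o.mom_init h s a
      obtain ⟨n1, n2, n3, n4, n5, n6⟩ := o'.mom_init h s a
      simp [o.N_init, o'.N_init, o.Q_init h hh, o'.Q_init h hh, o.QUCB_init h hh, o'.QUCB_init h hh,
        o.QLCB_init h hh, o'.QLCB_init h hh, o.QR_init h hh, o'.QR_init h hh, m1, m2, m3, m4, m5, m6,
        n1, n2, n3, n4, n5, n6]
    · simp [o.V_init h hh, o'.V_init h hh, o.VLCB_init h hh, o'.VLCB_init h hh, o.VR_init h hh,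
        o'.VR_init h hh, o.uref_init, o'.uref_init]
  | succ k hk1 ih =>
    simp only [Nat.add_sub_cancel] at hst hac
    apply agree_step o o' k (by simp; omega)
    · apply ih (by omega)
      · intro i hi; exact hst i (by simp at hi ⊢; omega)
      · intro i hi; exact hac i (by simp at hi ⊢; omega)
    · exact hst k (by simp; omega)
    · exact hac k (by simp; omega)

end Determ

lemma measurable_of_factor {Ω ι : Type} {S : Type} [Finite ι] [Finite S]
    [MeasurableSpace S] [MeasurableSingletonClass S] (m : MeasurableSpace Ω) (X : ι → Ω → S)
    (hX : ∀ i, Measurable[m] (X i)) (f : Ω → ℝ)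
    (hf : ∀ ω ω', (∀ i, X i ω = X i ω') → f ω = f ω') : Measurable[m] f := by
  have hXm : Measurable[m] (fun ω i => X i ω) := measurable_pi_lambda _ hX
  intro U _
  have : f ⁻¹' U = (fun ω i => X i ω) ⁻¹' ((fun ω i => X i ω) '' (f ⁻¹' U)) := by
    ext ω
    constructor
    · intro h; exact ⟨ω, h, rfl⟩
    · rintro ⟨ω', h', e⟩
      have : f ω' = f ω := hf _ _ (fun i => congrFun e i)
      simpa [← this] using h'
  rw [this]
  exact hXm (Set.toFinite _).measurableSet

/-- A function determined by the trajectory up to time `t` is `𝓕 t`-measurable. -/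
lemma measurable_of_traj {S A : Type} [Fintype S] [Fintype A] [Nonempty S] [Nonempty A]
    [MeasurableSpace S] [MeasurableSingletonClass S]
    [MeasurableSpace A] [MeasurableSingletonClass A]
    {Ω : Type} {m0 : MeasurableSpace Ω} (𝓕 : Filtration ℕ m0) (H K t : ℕ)
    (st : ℕ → ℕ → Ω → S) (ac : ℕ → ℕ → Ω → A)
    (hst : ∀ k ∈ Icc 1 K, ∀ h ∈ Icc 1 (H + 1), Measurable[𝓕 ((k - 1) * H + h)] (st k h))
    (hac : ∀ k ∈ Icc 1 K, ∀ h ∈ Icc 1 H, Measurable[𝓕 ((k - 1) * H + h)] (ac k h))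
    (f : Ω → ℝ)
    (hf : ∀ ω ω', (∀ k ∈ Icc 1 K, ∀ h ∈ Icc 1 (H + 1), (k - 1) * H + h ≤ t → st k h ω = st k h ω') →
      (∀ k ∈ Icc 1 K, ∀ h ∈ Icc 1 H, (k - 1) * H + h ≤ t → ac k h ω = ac k h ω') → f ω = f ω') :
    Measurable[𝓕 t] f := by
  classical
  obtain ⟨s0⟩ := ‹Nonempty S›
  obtain ⟨a0⟩ := ‹Nonempty A›
  let X : (Fin (K + 1) × Fin (H + 2)) → Ω → S × A := fun i ω =>
    (if (i.1.1 ∈ Icc 1 K ∧ i.2.1 ∈ Icc 1 (H + 1)) ∧ (i.1.1 - 1) * H + i.2.1 ≤ t then st i.1 i.2 ω else s0,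
     if (i.1.1 ∈ Icc 1 K ∧ i.2.1 ∈ Icc 1 H) ∧ (i.1.1 - 1) * H + i.2.1 ≤ t then ac i.1 i.2 ω else a0)
  apply measurable_of_factor (𝓕 t) X
  · intro i
    apply Measurable.prodMk
    · by_cases h : (i.1.1 ∈ Icc 1 K ∧ i.2.1 ∈ Icc 1 (H + 1)) ∧ (i.1.1 - 1) * H + i.2.1 ≤ t
      · simp only [h, if_true, and_self]
        exact (hst _ h.1.1 _ h.1.2).mono (𝓕.mono h.2) le_rfl
      · simp only [if_neg h]; exact measurable_const
    · by_cases h : (i.1.1 ∈ Icc 1 K ∧ i.2.1 ∈ Icc 1 H) ∧ (i.1.1 - 1) * H + i.2.1 ≤ t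
      · simp only [h, if_true, and_self]
        exact (hac _ h.1.1 _ h.1.2).mono (𝓕.mono h.2) le_rfl
      · simp only [if_neg h]; exact measurable_const
  · intro ω ω' h
    apply hf
    · intro k hk j hj ht
      have h1 := Finset.mem_Icc.1 hk
      have h2 := Finset.mem_Icc.1 hj
      have h3 := h (⟨k, by omega⟩, ⟨j, by omega⟩)
      have h4 := congrArg Prod.fst h3
      simp only [X] at h4
      rwa [if_pos ⟨⟨hk, hj⟩, ht⟩, if_pos ⟨⟨hk, hj⟩, ht⟩] at h4
    · intro k hk j hj ht
      have h1 := Finset.mem_Icc.1 hk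
      have h2 := Finset.mem_Icc.1 hj
      have h3 := h (⟨k, by omega⟩, ⟨j, by omega⟩)
      have h4 := congrArg Prod.snd h3
      simp only [X] at h4
      rwa [if_pos ⟨⟨hk, hj⟩, ht⟩, if_pos ⟨⟨hk, hj⟩, ht⟩] at h4

/-! ### The good event -/

noncomputable def clip (H x : ℝ) : ℝ := max 0 (min x H)

lemma clip_nonneg (H x : ℝ) : 0 ≤ clip H x := le_max_left _ _
lemma clip_le (H x : ℝ) (hH : 0 ≤ H) : clip H x ≤ H := max_le hH (min_le_right _ _)
lemma clip_eq (H x : ℝ) (h0 : 0 ≤ x) (h1 : x ≤ H) : clip H x = x := by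
  unfold clip; rw [min_eq_left h1, max_eq_right h0]

section Good
variable {S A : Type} [Fintype S] [Fintype A] [Nonempty S] [Nonempty A]

lemma QstarAux_bounds (M : MDP S A) (f h : ℕ) (s : S) (a : A) :
    0 ≤ M.QstarAux f h s a ∧ M.QstarAux f h s a ≤ f := by
  induction f generalizing h s a with
  | zero => simp [MDP.QstarAux]
  | succ f ih =>
    simp only [MDP.QstarAux]
    have hs : ∀ s', 0 ≤ (Finset.univ.sup' Finset.univ_nonempty fun a' => M.QstarAux f (h + 1) s' a') ∧
        (Finset.univ.sup' Finset.univ_nonempty fun a' => M.QstarAux f (h + 1) s' a') ≤ f := by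
      intro s'
      constructor
      · obtain ⟨a0⟩ := ‹Nonempty A›
        exact (ih (h+1) s' a0).1.trans (Finset.le_sup' (fun a' => M.QstarAux f (h + 1) s' a') (Finset.mem_univ a0))
      · exact Finset.sup'_le _ _ fun a' _ => (ih (h+1) s' a').2
    constructor
    · exact add_nonneg (M.r_nonneg _ _ _)
        (Finset.sum_nonneg fun s' _ => mul_nonneg (M.P_nonneg _ _ _ _) (hs s').1)
    · have : ∑ s' : S, M.P h s a s' *
        (Finset.univ.sup' Finset.univ_nonempty fun a' => M.QstarAux f (h + 1) s' a') ≤ ∑ s', M.P h s a s' * f :=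
        Finset.sum_le_sum fun s' _ => mul_le_mul_of_nonneg_left (hs s').2 (M.P_nonneg _ _ _ _)
      rw [← Finset.sum_mul, M.P_sum_one, one_mul] at this
      have := M.r_le_one h s a
      push_cast
      linarith

lemma Qstar_bounds (M : MDP S A) (h : ℕ) (hh : 1 ≤ h) (s : S) (a : A) :
    0 ≤ M.Qstar h s a ∧ M.Qstar h s a ≤ M.H := by
  obtain ⟨h1, h2⟩ := QstarAux_bounds M (M.H + 1 - h) h s a
  refine ⟨h1, h2.trans ?_⟩
  exact_mod_cast (by omega : M.H + 1 - h ≤ M.H)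

lemma Vstar_bounds (M : MDP S A) (h : ℕ) (hh : 1 ≤ h) (s : S) :
    0 ≤ M.Vstar h s ∧ M.Vstar h s ≤ M.H := by
  constructor
  · obtain ⟨a0⟩ := ‹Nonempty A›
    exact (Qstar_bounds M h hh s a0).1.trans (Finset.le_sup' (fun a => M.Qstar h s a) (Finset.mem_univ a0))
  · exact Finset.sup'_le _ _ fun a _ => (Qstar_bounds M h hh s a).2

lemma Vstar_terminal (M : MDP S A) (s : S) : M.Vstar (M.H + 1) s = 0 := by
  simp [MDP.Vstar, MDP.Qstar, MDP.QstarAux]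

lemma Qstar_bellman (M : MDP S A) (h : ℕ) (hh : h ∈ Icc 1 M.H) (s : S) (a : A) :
    M.Qstar h s a = M.r h s a + ∑ s', M.P h s a s' * M.Vstar (h + 1) s' := by
  have h1 := Finset.mem_Icc.1 hh
  unfold MDP.Vstar MDP.Qstar
  have : M.H + 1 - h = (M.H + 1 - (h + 1)) + 1 := by omega
  rw [this]
  simp only [MDP.QstarAux]

variable [DecidableEq S] [DecidableEq A] {M : MDP S A} {K : ℕ} {cb δ : ℝ}

abbrev visP (o : QLAlg M K cb δ) (h : ℕ) (s : S) (a : A) : ℕ → Prop :=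
  fun i => s = o.st i h ∧ a = o.ac i h

noncomputable def fam (o : QLAlg M K cb δ) (c : Fin 5) (h i : ℕ) (s' : S) : ℝ :=
  match c with
  | 0 => M.Vstar (h + 1) s'
  | 1 => clip M.H (o.V i (h + 1) s') - clip M.H (o.VR i (h + 1) s')
  | 2 => (clip M.H (o.V i (h + 1) s') - clip M.H (o.VR i (h + 1) s')) ^ 2
  | 3 => clip M.H (o.VR i (h + 1) s')
  | 4 => (clip M.H (o.VR i (h + 1) s')) ^ 2

noncomputable def fb (H : ℕ) (c : Fin 5) : ℝ :=
  match c with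
  | 0 => H
  | 1 => H
  | 2 => (H : ℝ) ^ 2
  | 3 => H
  | 4 => (H : ℝ) ^ 2

noncomputable def wt (H N : ℕ) (d : Fin 3) : ℕ → ℝ :=
  match d with
  | 0 => ew H N
  | 1 => cw H N
  | 2 => uw N

noncomputable def wm (H N : ℕ) (d : Fin 3) : ℝ :=
  match d with
  | 0 => 2 * H / N
  | 1 => 2 / N
  | 2 => 2 / N

noncomputable def sg (b : Bool) : ℝ := if b then 1 else -1

lemma wt_nonneg (H N : ℕ) (d : Fin 3) (n : ℕ) : 0 ≤ wt H N d n := by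
  fin_cases d
  · exact ew_nonneg _ _ _
  · exact cw_nonneg _ _ _
  · exact uw_nonneg _ _

lemma wt_le (H N : ℕ) (d : Fin 3) (n : ℕ) (hH : 1 ≤ H) (hN : 1 ≤ N) : wt H N d n ≤ wm H N d := by
  fin_cases d
  · exact ew_le _ _ _ hH hN
  · exact cw_le _ _ _ hH hN
  · exact uw_le _ _

lemma wt_zero (H N : ℕ) (d : Fin 3) (n : ℕ) (h : N < n) : wt H N d n = 0 := by
  fin_cases d
  · exact ew_zero_of_lt _ _ _ h
  · exact cw_zero_of_lt _ _ _ h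
  · exact uw_zero_of_lt _ _ h

lemma wm_pos (H N : ℕ) (d : Fin 3) (hH : 1 ≤ H) (hN : 1 ≤ N) : 0 < wm H N d := by
  have : (0 : ℝ) < H := by exact_mod_cast hH
  have : (0 : ℝ) < N := by exact_mod_cast hN
  fin_cases d <;> simp only [wm] <;> positivity

lemma fb_pos (H : ℕ) (c : Fin 5) (hH : 1 ≤ H) : 0 < fb H c := by
  have : (0 : ℝ) < H := by exact_mod_cast hH
  fin_cases c <;> simp only [fb] <;> positivity

lemma fam_bound (o : QLAlg M K cb δ) (c : Fin 5) (h i : ℕ) (s' : S) :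
    |fam o c h i s'| ≤ fb M.H c := by
  have hH : (0 : ℝ) ≤ M.H := by positivity
  have a1 := clip_nonneg M.H (o.V i (h + 1) s')
  have a2 := clip_le M.H (o.V i (h + 1) s') hH
  have b1 := clip_nonneg M.H (o.VR i (h + 1) s')
  have b2 := clip_le M.H (o.VR i (h + 1) s') hH
  have c1 := Vstar_bounds M (h + 1) (by omega) s'
  have d1 : |clip M.H (o.V i (h + 1) s') - clip M.H (o.VR i (h + 1) s')| ≤ M.H := by
    rw [abs_le]; constructor <;> linarith
  have d2 : |clip M.H (o.VR i (h + 1) s')| ≤ M.H := by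
    rw [abs_le]; constructor <;> linarith
  fin_cases c <;> simp only [fam, fb]
  · rw [abs_le]; constructor <;> linarith
  · exact d1
  · rw [abs_pow]; exact pow_le_pow_left₀ (abs_nonneg _) d1 2
  · exact d2
  · rw [abs_pow]; exact pow_le_pow_left₀ (abs_nonneg _) d2 2

noncomputable def gfun (o : QLAlg M K cb δ) (h : ℕ) (s : S) (a : A) (N j : ℕ) (c : Fin 5) (d : Fin 3)
    (b : Bool) (i : ℕ) (s' : S) : ℝ :=
  if visP o h s a i then
    sg b * (1 / (2 * wm M.H N d * fb M.H c * j)) * wt M.H N d (cnt (visP o h s a) i) * fam o c h i s'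
  else 0

noncomputable def gsum (o : QLAlg M K cb δ) (h : ℕ) (s : S) (a : A) (N j : ℕ) (c : Fin 5) (d : Fin 3)
    (b : Bool) : ℝ :=
  ∑ i ∈ Icc 1 K, (gfun o h s a N j c d b i (o.st i (h + 1))
    - ∑ t, M.P h (o.st i h) (o.ac i h) t * gfun o h s a N j c d b i t
    - (∑ t, M.P h (o.st i h) (o.ac i h) t * gfun o h s a N j c d b i t ^ 2
      - (∑ t, M.P h (o.st i h) (o.ac i h) t * gfun o h s a N j c d b i t) ^ 2))

def GoodEv (o : QLAlg M K cb δ) (x : ℝ) : Prop :=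
  ∀ h ∈ Icc 1 M.H, ∀ s a, ∀ N ∈ Icc 1 K, ∀ j ∈ Icc 1 K, ∀ c d b, gsum o h s a N j c d b < x

lemma gfun_bound (o : QLAlg M K cb δ) (h : ℕ) (s : S) (a : A) (N j : ℕ) (hN : 1 ≤ N) (hj : 1 ≤ j)
    (c : Fin 5) (d : Fin 3) (b : Bool) (i : ℕ) (s' : S) : |gfun o h s a N j c d b i s'| ≤ 1 / 2 := by
  unfold gfun
  split_ifs
  · have h1 := fam_bound o c h i s'
    have h2 := wt_le M.H N d (cnt (visP o h s a) i) M.H_pos hN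
    have h3 := wt_nonneg M.H N d (cnt (visP o h s a) i)
    have h4 := wm_pos M.H N d M.H_pos hN
    have h5 := fb_pos M.H c M.H_pos
    have h6 : (1 : ℝ) ≤ j := by exact_mod_cast hj
    have h7 : |sg b| = 1 := by cases b <;> simp [sg]
    rw [abs_mul, abs_mul, abs_mul, h7, one_mul, abs_of_nonneg h3, abs_of_nonneg (by positivity)]
    calc _ ≤ 1 / (2 * wm M.H N d * fb M.H c * j) * wm M.H N d * fb M.H c := by gcongr
      _ = 1 / (2 * j) := by field_simp
      _ ≤ 1 / 2 := by
        apply one_div_le_one_div_of_le <;> linarith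
  · simp

end Good

section GoodProb
variable {S A : Type} [Fintype S] [Fintype A] [Nonempty S] [Nonempty A]
  [DecidableEq S] [DecidableEq A]
  [MeasurableSpace S] [MeasurableSingletonClass S] [MeasurableSpace A] [MeasurableSingletonClass A]
  {M : MDP S A} {K : ℕ} {cb δ : ℝ}
  {Ω : Type} {m0 : MeasurableSpace Ω} (μ : Measure Ω) [IsProbabilityMeasure μ]
  (𝓕 : Filtration ℕ m0) (alg : Ω → QLAlg M K cb δ)

lemma cnt_congr (v v' : ℕ → Prop) [DecidablePred v] [DecidablePred v'] (n : ℕ)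
    (h : ∀ i ∈ Icc 1 n, (v i ↔ v' i)) : cnt v n = cnt v' n := by
  induction n with
  | zero => rfl
  | succ n ih =>
    simp only [cnt]
    rw [ih (fun i hi => h i (by simp at hi ⊢; omega))]
    have := h (n + 1) (by simp)
    by_cases h1 : v (n + 1)
    · simp [h1, this.1 h1]
    · have h2 : ¬ v' (n + 1) := fun h' => h1 (this.2 h')
      simp [h1, h2]

lemma gsum_tail
    (htraj : IsMDPTrajectory μ M K 𝓕 (fun k h ω => (alg ω).st k h) (fun k h ω => (alg ω).ac k h))
    (h : ℕ) (hh : h ∈ Icc 1 M.H) (s : S) (a : A) (N j : ℕ) (hN : 1 ≤ N) (hj : 1 ≤ j)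
    (c : Fin 5) (d : Fin 3) (b : Bool) (x : ℝ) :
    μ {ω | x ≤ gsum (alg ω) h s a N j c d b} ≤ ENNReal.ofReal (Real.exp (-x)) := by
  obtain ⟨hst, hac, hc⟩ := htraj
  have hh1 := Finset.mem_Icc.1 hh
  have hHpos := M.H_pos
  refine freedman_tail μ K (fun k => 𝓕 ((k - 1) * M.H + h)) (fun k => 𝓕.le _) ?_
    (fun i ω => (alg ω).st i (h + 1)) (fun i ω t => M.P h ((alg ω).st i h) ((alg ω).ac i h) t)
    (fun i ω t => gfun (alg ω) h s a N j c d b i t) ?_ ?_ ?_ ?_ ?_ ?_ ?_ x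
  · intro k hk
    apply 𝓕.mono
    simp only [Nat.add_sub_cancel]
    exact Nat.add_le_add_right (Nat.mul_le_mul_right _ (by omega)) _
  · intro k hk
    refine (hst k hk (h + 1) (by simp; omega)).mono (𝓕.mono ?_) le_rfl
    have hk1 := Finset.mem_Icc.1 hk
    obtain ⟨k', rfl⟩ : ∃ k', k = k' + 1 := ⟨k - 1, by omega⟩
    simp only [Nat.add_sub_cancel]
    have : (k' + 1) * M.H = k' * M.H + M.H := by ring
    omega
  · intro k hk t
    apply measurable_of_traj 𝓕 M.H K _ _ _ hst hac
    intro ω ω' h1 h2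
    have e1 := h1 k hk h (by simp; omega) le_rfl
    have e2 := h2 k hk h hh le_rfl
    rw [e1, e2]
  · intro k hk ω t; exact M.P_nonneg _ _ _ _
  · intro k hk ω; exact M.P_sum_one _ _ _
  · intro k hk t; exact hc k hk h hh t
  · intro k hk t
    apply measurable_of_traj 𝓕 M.H K _ _ _ hst hac
    intro ω ω' h1 h2
    have hk1 := Finset.mem_Icc.1 hk
    have hv : ∀ i ∈ Icc 1 k, (visP (alg ω) h s a i ↔ visP (alg ω') h s a i) := by
      intro i hi
      have hi1 := Finset.mem_Icc.1 hi
      have hle : (i - 1) * M.H + h ≤ (k - 1) * M.H + h :=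
        Nat.add_le_add_right (Nat.mul_le_mul_right _ (by omega)) _
      have e1 := h1 i (by simp; omega) h (by simp; omega) hle
      have e2 := h2 i (by simp; omega) h hh hle
      simp only [visP, e1, e2]
    have hcnt := cnt_congr (visP (alg ω) h s a) (visP (alg ω') h s a) k hv
    have hle : ∀ i ∈ Icc 1 (k - 1), ∀ h' ≤ M.H + 1, (i - 1) * M.H + h' ≤ (k - 1) * M.H + h := by
      intro i hi h' hh'
      have hi1 := Finset.mem_Icc.1 hi
      obtain ⟨i', rfl⟩ : ∃ i', i = i' + 1 := ⟨i - 1, by omega⟩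
      have h3 : (i' + 1) * M.H ≤ (k - 1) * M.H := Nat.mul_le_mul_right _ hi1.2
      have h4 : (i' + 1) * M.H = i' * M.H + M.H := by ring
      simp only [Nat.add_sub_cancel]
      omega
    have hag := agree_all (alg ω) (alg ω') k hk1.1 (by omega)
      (fun i hi h' hh' => h1 i (by simp at hi ⊢; omega) h' hh' (hle i hi h' (by simp at hh'; omega)))
      (fun i hi h' hh' => h2 i (by simp at hi ⊢; omega) h' hh' (hle i hi h' (by simp at hh'; omega)))
    have hV : (alg ω).V k (h + 1) t = (alg ω').V k (h + 1) t ∧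
        (alg ω).VR k (h + 1) t = (alg ω').VR k (h + 1) t := by
      rcases Nat.lt_or_ge h M.H with hlt | hge
      · have := (hag (h + 1) (by simp; omega)).2 t
        exact ⟨this.1, this.2.2.1⟩
      · have : h = M.H := by omega
        subst this
        obtain ⟨a, b, c⟩ := (alg ω).V_terminal k t
        obtain ⟨a', b', c'⟩ := (alg ω').V_terminal k t
        exact ⟨a.trans a'.symm, b.trans b'.symm⟩
    have hfam : fam (alg ω) c h k t = fam (alg ω') c h k t := by
      fin_cases c <;> simp only [fam, hV.1, hV.2]
    simp only [gfun]
    rw [hcnt, hfam]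
    have := hv k (by simp; omega)
    by_cases hq : visP (alg ω) h s a k
    · rw [if_pos hq, if_pos (this.1 hq)]
    · rw [if_neg hq, if_neg (fun h' => hq (this.2 h'))]
  · intro k hk ω t
    exact gfun_bound _ _ _ _ _ _ hN hj _ _ _ _ _

lemma good_prob
    (htraj : IsMDPTrajectory μ M K 𝓕 (fun k h ω => (alg ω).st k h) (fun k h ω => (alg ω).ac k h))
    (x : ℝ) :
    μ {ω | ¬ GoodEv (alg ω) x} ≤
      ENNReal.ofReal (30 * ((Fintype.card S : ℝ) * Fintype.card A * M.H * K * K) * Real.exp (-x)) := by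
  let I : Finset (ℕ × S × A × ℕ × ℕ × Fin 5 × Fin 3 × Bool) :=
    Icc 1 M.H ×ˢ univ ×ˢ univ ×ˢ Icc 1 K ×ˢ Icc 1 K ×ˢ univ ×ˢ univ ×ˢ univ
  have hsub : {ω | ¬ GoodEv (alg ω) x} ⊆ ⋃ i ∈ I,
      {ω | x ≤ gsum (alg ω) i.1 i.2.1 i.2.2.1 i.2.2.2.1 i.2.2.2.2.1 i.2.2.2.2.2.1 i.2.2.2.2.2.2.1
        i.2.2.2.2.2.2.2} := by
    intro ω hω
    simp only [Set.mem_ofPred_eq, GoodEv] at hω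
    push Not at hω
    obtain ⟨h, hh, s, a, N, hN, j, hj, c, d, b, hx⟩ := hω
    refine Set.mem_biUnion (x := (h, s, a, N, j, c, d, b)) ?_ hx
    simp only [I, Finset.coe_product, Set.mem_prod, Finset.mem_coe]
    exact ⟨hh, mem_univ _, mem_univ _, hN, hj, mem_univ _, mem_univ _, mem_univ _⟩
  refine (measure_mono hsub).trans ((measure_biUnion_finset_le _ _).trans ?_)
  have : ∀ i ∈ I, μ {ω | x ≤ gsum (alg ω) i.1 i.2.1 i.2.2.1 i.2.2.2.1 i.2.2.2.2.1 i.2.2.2.2.2.1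
      i.2.2.2.2.2.2.1 i.2.2.2.2.2.2.2} ≤ ENNReal.ofReal (Real.exp (-x)) := by
    intro i hi
    simp only [I, Finset.mem_product] at hi
    exact gsum_tail μ 𝓕 alg htraj _ hi.1 _ _ _ _ (Finset.mem_Icc.1 hi.2.2.2.1).1
      (Finset.mem_Icc.1 hi.2.2.2.2.1).1 _ _ _ _
  refine (Finset.sum_le_sum this).trans ?_
  rw [Finset.sum_const, nsmul_eq_mul, ENNReal.ofReal_mul (by positivity)]
  gcongr
  rw [← ENNReal.ofReal_natCast]
  apply ENNReal.ofReal_le_ofReal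
  simp only [I, Finset.card_product, Finset.card_univ, Nat.card_Icc, Fintype.card_fin,
    Fintype.card_bool, Nat.add_sub_cancel]
  push_cast
  apply le_of_eq
  ring

end GoodProb

/-! ### Deterministic consequences of the good event -/

lemma grid_opt (X A w b x : ℝ) (N : ℕ) (hN : 1 ≤ N) (hw : 0 < w) (hb : 0 < b) (hx : 1 / 4 ≤ x)
    (hA : 0 ≤ A) (hAN : A ≤ N * (w * b ^ 2))
    (hX : ∀ j : ℕ, 1 ≤ j → j ≤ N → X ≤ A / (2 * b * j) + 2 * w * b * j * x) :
    X ≤ 2 * Real.sqrt (w * x * A) + 2 * w * b * x := by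
  have hx0 : 0 < x := by linarith
  set q := Real.sqrt (w * x * A) with hq
  have hq0 : 0 ≤ q := Real.sqrt_nonneg _
  have hqq : q ^ 2 = w * x * A := Real.sq_sqrt (by positivity)
  have hN1 : (1 : ℝ) ≤ N := by exact_mod_cast hN
  set y := q / (2 * w * b * x) with hy
  have hy0 : 0 ≤ y := by positivity
  have hqy : q = y * (2 * w * b * x) := by rw [hy]; field_simp
  have hyN : y ≤ N := by
    rw [hy, div_le_iff₀ (by positivity)]
    apply le_of_sq_le_sq _ (by positivity)
    rw [hqq]
    calc w * x * A ≤ w * x * (N * (w * b ^ 2)) := by gcongr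
      _ = (w * b) ^ 2 * x * N * 1 := by ring
      _ ≤ (w * b) ^ 2 * x * N * (4 * x * N) := by
        gcongr
        nlinarith
      _ = (N * (2 * w * b * x)) ^ 2 := by ring
  set j := max 1 ⌈y⌉₊ with hj
  have hj1 : 1 ≤ j := le_max_left _ _
  have hjN : j ≤ N := max_le hN (Nat.ceil_le.2 hyN)
  have hyj : y ≤ j := (Nat.le_ceil y).trans (by exact_mod_cast le_max_right _ _)
  have hjy : (j : ℝ) ≤ y + 1 := by
    rw [hj]; push_cast
    exact max_le (by linarith) (Nat.ceil_lt_add_one hy0).le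
  have hj0 : (0 : ℝ) < j := by exact_mod_cast hj1
  have h1 := hX j hj1 hjN
  have h2 : A / (2 * b * j) ≤ q := by
    rw [div_le_iff₀ (by positivity)]
    have : w * x * A ≤ w * x * (q * (2 * b * j)) := by
      rw [← hqq]
      calc q ^ 2 = q * (y * (2 * w * b * x)) := by rw [← hqy]; ring
        _ ≤ q * (j * (2 * w * b * x)) := by gcongr
        _ = _ := by ring
    exact le_of_mul_le_mul_left this (by positivity)
  have h3 : 2 * w * b * j * x ≤ q + 2 * w * b * x := by
    calc 2 * w * b * j * x = 2 * w * b * x * j := by ring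
      _ ≤ 2 * w * b * x * (y + 1) := by gcongr
      _ = q + 2 * w * b * x := by rw [hqy]; ring
  linarith

section Det
variable {S A : Type} [Fintype S] [Fintype A] [Nonempty S] [Nonempty A]
  [DecidableEq S] [DecidableEq A] {M : MDP S A} {K : ℕ} {cb δ : ℝ}

lemma PV_bound (M : MDP S A) (h : ℕ) (s : S) (a : A) (f : S → ℝ) (b : ℝ) (hf : ∀ t, |f t| ≤ b) :
    |∑ t, M.P h s a t * f t| ≤ b := by
  calc _ ≤ ∑ t, |M.P h s a t * f t| := Finset.abs_sum_le_sum_abs _ _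
    _ ≤ ∑ t, M.P h s a t * b := by
      apply Finset.sum_le_sum
      intro t _
      rw [abs_mul, abs_of_nonneg (M.P_nonneg _ _ _ _)]
      exact mul_le_mul_of_nonneg_left (hf t) (M.P_nonneg _ _ _ _)
    _ = b := by rw [← Finset.sum_mul, M.P_sum_one, one_mul]

lemma PV_mono (M : MDP S A) (h : ℕ) (s : S) (a : A) (f g : S → ℝ) (hf : ∀ t, f t ≤ g t) :
    ∑ t, M.P h s a t * f t ≤ ∑ t, M.P h s a t * g t :=
  Finset.sum_le_sum fun t _ => mul_le_mul_of_nonneg_left (hf t) (M.P_nonneg _ _ _ _)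

lemma varP_nonneg (M : MDP S A) (h : ℕ) (s : S) (a : A) (f : S → ℝ) : 0 ≤ M.varP h s a f := by
  unfold MDP.varP
  set m := ∑ t, M.P h s a t * f t with hm
  have h1 : 0 ≤ ∑ t, M.P h s a t * (f t - m) ^ 2 :=
    Finset.sum_nonneg fun t _ => mul_nonneg (M.P_nonneg _ _ _ _) (sq_nonneg _)
  have h2 : ∑ t, M.P h s a t * (f t - m) ^ 2 = ∑ t, M.P h s a t * f t ^ 2 - m ^ 2 := by
    calc _ = ∑ t, (M.P h s a t * f t ^ 2 - 2 * m * (M.P h s a t * f t) + m ^ 2 * M.P h s a t) := by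
          apply Finset.sum_congr rfl; intro t _; ring
      _ = _ := by
          rw [Finset.sum_add_distrib, Finset.sum_sub_distrib, ← Finset.mul_sum, ← Finset.mul_sum,
            M.P_sum_one, ← hm]
          ring
  linarith

lemma varP_le (M : MDP S A) (h : ℕ) (s : S) (a : A) (f : S → ℝ) (b : ℝ) (hf : ∀ t, |f t| ≤ b) :
    M.varP h s a f ≤ b ^ 2 := by
  unfold MDP.varP
  have h1 : ∑ t, M.P h s a t * f t ^ 2 ≤ b ^ 2 := by
    refine (le_abs_self _).trans (PV_bound M h s a (fun t => f t ^ 2) (b ^ 2) fun t => ?_)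
    rw [abs_pow]; exact pow_le_pow_left₀ (abs_nonneg _) (hf t) 2
  nlinarith [sq_nonneg (∑ t, M.P h s a t * f t)]

lemma freedman_det (o : QLAlg M K cb δ) (x : ℝ) (hx : 1 / 4 ≤ x) (good : GoodEv o x)
    (h : ℕ) (hh : h ∈ Icc 1 M.H) (s : S) (a : A) (k : ℕ) (hk : k ≤ K)
    (hN : 1 ≤ cnt (visP o h s a) k) (c : Fin 5) (d : Fin 3) :
    |ws (visP o h s a) (wt M.H (cnt (visP o h s a) k) d)
      (fun i => fam o c h i (o.st i (h + 1)) - ∑ t, M.P h s a t * fam o c h i t) k| ≤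
    2 * Real.sqrt (wm M.H (cnt (visP o h s a) k) d * x *
      ws (visP o h s a) (wt M.H (cnt (visP o h s a) k) d) (fun i => M.varP h s a (fam o c h i)) k)
    + 2 * wm M.H (cnt (visP o h s a) k) d * fb M.H c * x := by
  set v := visP o h s a with hv
  set N := cnt v k with hNdef
  set w := wt M.H N d with hw
  set D : ℕ → ℝ := fun i => fam o c h i (o.st i (h + 1)) - ∑ t, M.P h s a t * fam o c h i t with hD
  set Va : ℕ → ℝ := fun i => M.varP h s a (fam o c h i) with hVa
  have hw0 : ∀ n, 0 ≤ w n := wt_nonneg _ _ _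
  have hwm : ∀ n, w n ≤ wm M.H N d := fun n => wt_le _ _ _ _ M.H_pos hN
  have hwmp := wm_pos M.H N d M.H_pos hN
  have hfb := fb_pos M.H c M.H_pos
  have hVa0 : ∀ i, 0 ≤ Va i := fun i => varP_nonneg _ _ _ _ _
  have hVab : ∀ i, Va i ≤ fb M.H c ^ 2 := fun i => varP_le _ _ _ _ _ _ (fam_bound o c h i)
  have hNK : N ≤ K := (cnt_le v k).trans hk
  have key : ∀ b : Bool, sg b * ws v w D k ≤
      2 * Real.sqrt (wm M.H N d * x * ws v w Va k) + 2 * wm M.H N d * fb M.H c * x := by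
    intro b
    apply grid_opt _ _ _ _ _ N hN hwmp hfb hx
    · exact ws_nonneg v fun i _ _ => mul_nonneg (hw0 _) (hVa0 _)
    · apply ws_le_card
      intro i _ _
      exact mul_le_mul (hwm _) (hVab _) (hVa0 _) hwmp.le
    · intro j hj1 hjN
      have hj0 : (0 : ℝ) < j := by exact_mod_cast hj1
      have hg := good h hh s a N (by simp; omega) j (by simp; omega) c d b
      set l : ℝ := 1 / (2 * wm M.H N d * fb M.H c * j) with hl
      have hl0 : 0 < l := by positivity
      have hsg : sg b ^ 2 = 1 := by cases b <;> simp [sg]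
      have e1 : gsum o h s a N j c d b = sg b * l * ws v w D K - l ^ 2 * ws v (fun n => w n ^ 2) Va K := by
        unfold gsum ws
        rw [Finset.mul_sum, Finset.mul_sum, ← Finset.sum_sub_distrib]
        apply Finset.sum_congr rfl
        intro i _
        by_cases hvi : v i
        · rw [if_pos hvi, if_pos hvi]
          have hg : ∀ t, gfun o h s a N j c d b i t = sg b * l * w (cnt v i) * fam o c h i t := by
            intro t
            unfold gfun
            rw [if_pos hvi]
          simp_rw [hg]
          rw [← hvi.1, ← hvi.2]
          have s1 : ∑ t, M.P h s a t * (sg b * l * w (cnt v i) * fam o c h i t)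
              = sg b * l * w (cnt v i) * ∑ t, M.P h s a t * fam o c h i t := by
            rw [Finset.mul_sum]; apply Finset.sum_congr rfl; intro t _; ring
          have s2 : ∑ t, M.P h s a t * (sg b * l * w (cnt v i) * fam o c h i t) ^ 2
              = l ^ 2 * w (cnt v i) ^ 2 * ∑ t, M.P h s a t * fam o c h i t ^ 2 := by
            rw [Finset.mul_sum]; apply Finset.sum_congr rfl; intro t _
            rw [mul_pow, mul_pow, mul_pow, hsg]; ring
          rw [s1, s2]
          simp only [hD, hVa, MDP.varP]
          rw [mul_pow, mul_pow, mul_pow, hsg]; ring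
        · rw [if_neg hvi, if_neg hvi]
          have hg : ∀ t, gfun o h s a N j c d b i t = 0 := by
            intro t
            unfold gfun
            rw [if_neg hvi]
          simp [hg]
      have e2 : ws v w D K = ws v w D k := ws_extend v _ _ hk fun n hn => wt_zero _ _ _ _ hn
      have e3 : ws v (fun n => w n ^ 2) Va K = ws v (fun n => w n ^ 2) Va k :=
        ws_extend v _ _ hk fun n hn => by
          have : w n = 0 := wt_zero _ _ _ _ hn
          simp [this]
      have e4 : ws v (fun n => w n ^ 2) Va k ≤ wm M.H N d * ws v w Va k := by
        rw [← ws_smul_w]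
        apply ws_mono
        intro i _ _
        have := hw0 (cnt v i)
        have := hwm (cnt v i)
        apply mul_le_mul_of_nonneg_right _ (hVa0 i)
        nlinarith
      rw [e1, e2, e3] at hg
      have e5 : l * (sg b * ws v w D k) ≤ l * (ws v w Va k / (2 * fb M.H c * j) + 2 * wm M.H N d * fb M.H c * j * x) := by
        have r1 : l * (2 * wm M.H N d * fb M.H c * j) = 1 := by rw [hl]; field_simp
        have r2 : ws v w Va k / (2 * fb M.H c * j) = l * (wm M.H N d * ws v w Va k) := by
          rw [hl]; field_simp
        rw [r2, mul_add]
        have : l ^ 2 * ws v (fun n => w n ^ 2) Va k ≤ l ^ 2 * (wm M.H N d * ws v w Va k) := by gcongr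
        calc _ ≤ x + l ^ 2 * (wm M.H N d * ws v w Va k) := by linarith
          _ = (l * (2 * wm M.H N d * fb M.H c * j)) * x + l ^ 2 * (wm M.H N d * ws v w Va k) := by rw [r1, one_mul]
          _ = _ := by ring
      exact le_of_mul_le_mul_left e5 hl0
  rw [abs_le]
  have k1 := key true
  have k2 := key false
  simp only [sg, if_true, Bool.false_eq_true, if_false] at k1 k2
  constructor <;> linarith

end Det

/-! ### Closed forms of the iterates -/

section Closed
variable {S A : Type} [Fintype S] [Fintype A] [Nonempty S] [Nonempty A]
  [DecidableEq S] [DecidableEq A] {M : MDP S A} {K : ℕ} {cb δ : ℝ}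

lemma N_eq (o : QLAlg M K cb δ) (h : ℕ) (hh : h ∈ Icc 1 M.H) (s : S) (a : A) (k : ℕ) (hk : k ≤ K) :
    o.N k h s a = cnt (visP o h s a) k := by
  induction k with
  | zero => simp [cnt, o.N_init]
  | succ k ih =>
    rw [o.N_upd (k + 1) (by simp; omega) h hh s a]
    simp only [cnt, Nat.add_sub_cancel]
    rw [ih (by omega)]

lemma QUCB_eq (o : QLAlg M K cb δ) (h : ℕ) (hh : h ∈ Icc 1 M.H) (s : S) (a : A) (k : ℕ) (hk : k ≤ K) :
    o.QUCB (k + 1) h s a = (if cnt (visP o h s a) k = 0 then (M.H : ℝ) else M.r h s a)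
      + ws (visP o h s a) (ew M.H (cnt (visP o h s a) k)) (fun i => o.V i (h + 1) (o.st i (h + 1))
        + cb * Real.sqrt ((M.H : ℝ) ^ 3 * iota S A K M.H δ / (cnt (visP o h s a) i))) k := by
  induction k with
  | zero => simp [cnt, ws_zero, o.QUCB_init h hh]
  | succ k ih =>
    rw [o.QUCB_upd (k + 1) (by simp; omega) h hh s a, ew_ws_succ, ih (by omega), N_eq o h hh s a _ hk]
    by_cases hv : visP o h s a (k + 1)
    · have hc : cnt (visP o h s a) (k + 1) = cnt (visP o h s a) k + 1 := by
        simp only [cnt]; rw [if_pos hv]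
      rw [if_pos hv, if_pos hv, if_neg (show ¬ cnt (visP o h s a) (k + 1) = 0 by omega)]
      by_cases h0 : cnt (visP o h s a) k = 0
      · rw [if_pos h0, hc, h0]; simp only [zero_add, lr_one]; ring
      · rw [if_neg h0]; ring
    · have hc : cnt (visP o h s a) (k + 1) = cnt (visP o h s a) k := by
        simp only [cnt]; rw [if_neg hv, add_zero]
      rw [if_neg hv, if_neg hv, hc]

lemma QLCB_eq (o : QLAlg M K cb δ) (h : ℕ) (hh : h ∈ Icc 1 M.H) (s : S) (a : A) (k : ℕ) (hk : k ≤ K) :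
    o.QLCB (k + 1) h s a = (if cnt (visP o h s a) k = 0 then (0 : ℝ) else M.r h s a)
      + ws (visP o h s a) (ew M.H (cnt (visP o h s a) k)) (fun i => o.VLCB i (h + 1) (o.st i (h + 1))
        - cb * Real.sqrt ((M.H : ℝ) ^ 3 * iota S A K M.H δ / (cnt (visP o h s a) i))) k := by
  induction k with
  | zero => simp [cnt, ws_zero, o.QLCB_init h hh]
  | succ k ih =>
    rw [o.QLCB_upd (k + 1) (by simp; omega) h hh s a, ew_ws_succ, ih (by omega), N_eq o h hh s a _ hk]
    by_cases hv : visP o h s a (k + 1)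
    · have hc : cnt (visP o h s a) (k + 1) = cnt (visP o h s a) k + 1 := by
        simp only [cnt]; rw [if_pos hv]
      rw [if_pos hv, if_pos hv, if_neg (show ¬ cnt (visP o h s a) (k + 1) = 0 by omega)]
      by_cases h0 : cnt (visP o h s a) k = 0
      · rw [if_pos h0, hc, h0]; simp only [zero_add, lr_one]; ring
      · rw [if_neg h0]; ring
    · have hc : cnt (visP o h s a) (k + 1) = cnt (visP o h s a) k := by
        simp only [cnt]; rw [if_neg hv, add_zero]
      rw [if_neg hv, if_neg hv, hc]

lemma muRef_eq (o : QLAlg M K cb δ) (h : ℕ) (hh : h ∈ Icc 1 M.H) (s : S) (a : A) (k : ℕ) (hk : k ≤ K) :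
    o.muRef (k + 1) h s a = ws (visP o h s a) (uw (cnt (visP o h s a) k))
      (fun i => o.VR i (h + 1) (o.st i (h + 1))) k := by
  induction k with
  | zero => simp [ws_zero, (o.mom_init h s a).1]
  | succ k ih =>
    rw [o.muRef_upd (k + 1) (by simp; omega) h hh s a, uw_ws_succ, ih (by omega), N_eq o h hh s a _ hk]

lemma sigRef_eq (o : QLAlg M K cb δ) (h : ℕ) (hh : h ∈ Icc 1 M.H) (s : S) (a : A) (k : ℕ) (hk : k ≤ K) :
    o.sigRef (k + 1) h s a = ws (visP o h s a) (uw (cnt (visP o h s a) k))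
      (fun i => (o.VR i (h + 1) (o.st i (h + 1))) ^ 2) k := by
  induction k with
  | zero => simp [ws_zero, (o.mom_init h s a).2.1]
  | succ k ih =>
    rw [o.sigRef_upd (k + 1) (by simp; omega) h hh s a, uw_ws_succ, ih (by omega), N_eq o h hh s a _ hk]

lemma muAdv_eq (o : QLAlg M K cb δ) (h : ℕ) (hh : h ∈ Icc 1 M.H) (s : S) (a : A) (k : ℕ) (hk : k ≤ K) :
    o.muAdv (k + 1) h s a = ws (visP o h s a) (ew M.H (cnt (visP o h s a) k))
      (fun i => o.V i (h + 1) (o.st i (h + 1)) - o.VR i (h + 1) (o.st i (h + 1))) k := by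
  induction k with
  | zero => simp [ws_zero, (o.mom_init h s a).2.2.1]
  | succ k ih =>
    rw [o.muAdv_upd (k + 1) (by simp; omega) h hh s a, ew_ws_succ, ih (by omega), N_eq o h hh s a _ hk]

lemma sigAdv_eq (o : QLAlg M K cb δ) (h : ℕ) (hh : h ∈ Icc 1 M.H) (s : S) (a : A) (k : ℕ) (hk : k ≤ K) :
    o.sigAdv (k + 1) h s a = ws (visP o h s a) (ew M.H (cnt (visP o h s a) k))
      (fun i => (o.V i (h + 1) (o.st i (h + 1)) - o.VR i (h + 1) (o.st i (h + 1))) ^ 2) k := by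
  induction k with
  | zero => simp [ws_zero, (o.mom_init h s a).2.2.2.1]
  | succ k ih =>
    rw [o.sigAdv_upd (k + 1) (by simp; omega) h hh s a, ew_ws_succ, ih (by omega), N_eq o h hh s a _ hk]

lemma BR_eq (o : QLAlg M K cb δ) (h : ℕ) (hh : h ∈ Icc 1 M.H) (s : S) (a : A) (k : ℕ) (hk : k ≤ K) :
    o.BR (k + 1) h s a = cb * Real.sqrt (iota S A K M.H δ / (cnt (visP o h s a) k)) *
          (Real.sqrt (o.sigRef (k + 1) h s a - (o.muRef (k + 1) h s a) ^ 2)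
            + Real.sqrt (M.H) * Real.sqrt (o.sigAdv (k + 1) h s a - (o.muAdv (k + 1) h s a) ^ 2)) := by
  induction k with
  | zero => simp [cnt, o.mom_init h s a]
  | succ k ih =>
    rw [o.BR_upd (k + 1) (by simp; omega) h hh s a, ih (by omega), N_eq o h hh s a _ hk]
    by_cases hv : visP o h s a (k + 1)
    · rw [if_pos hv]
    · have hc : cnt (visP o h s a) (k + 1) = cnt (visP o h s a) k := by
        simp only [cnt]; rw [if_neg hv, add_zero]
      rw [if_neg hv, hc, o.sigRef_upd (k + 1) (by simp; omega) h hh s a, if_neg hv,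
        o.muRef_upd (k + 1) (by simp; omega) h hh s a, if_neg hv,
        o.sigAdv_upd (k + 1) (by simp; omega) h hh s a, if_neg hv,
        o.muAdv_upd (k + 1) (by simp; omega) h hh s a, if_neg hv]

lemma QR_eq (o : QLAlg M K cb δ) (h : ℕ) (hh : h ∈ Icc 1 M.H) (s : S) (a : A) (k : ℕ) (hk : k ≤ K) :
    o.QR (k + 1) h s a = (if cnt (visP o h s a) k = 0 then (M.H : ℝ) else M.r h s a)
      + ws (visP o h s a) (ew M.H (cnt (visP o h s a) k))
        (fun i => o.V i (h + 1) (o.st i (h + 1)) - o.VR i (h + 1) (o.st i (h + 1))) k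
      + ws (visP o h s a) (cw M.H (cnt (visP o h s a) k)) (fun i => o.VR i (h + 1) (o.st i (h + 1))) k
      + o.BR (k + 1) h s a
      + ws (visP o h s a) (ew M.H (cnt (visP o h s a) k))
        (fun i => cb * (M.H : ℝ) ^ 2 * iota S A K M.H δ
          / (cnt (visP o h s a) i : ℝ) ^ ((3 : ℝ) / 4)) k := by
  induction k with
  | zero => simp [cnt, ws_zero, o.QR_init h hh, o.mom_init h s a]
  | succ k ih =>
    have hm := muRef_eq o h hh s a (k + 1) hk
    rw [o.QR_upd (k + 1) (by simp; omega) h hh s a, ew_ws_succ, ew_ws_succ, cw_ws_succ, ih (by omega),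
      ← hm, N_eq o h hh s a _ hk]
    by_cases hv : visP o h s a (k + 1)
    · have hc : cnt (visP o h s a) (k + 1) = cnt (visP o h s a) k + 1 := by
        simp only [cnt]; rw [if_pos hv]
      have hl : lr M.H (cnt (visP o h s a) (k + 1)) ≠ 0 := by
        unfold lr; rw [hc]; positivity
      rw [if_pos hv, if_pos hv, if_pos hv, if_pos hv, if_neg (show ¬ cnt (visP o h s a) (k + 1) = 0 by omega),
        o.bR_def (k + 1) (by simp; omega) h hh, ← hv.1, ← hv.2,
        o.dR_upd (k + 1) (by simp; omega) h hh s a, if_pos hv, N_eq o h hh s a _ hk]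
      have hr : (1 - lr M.H (cnt (visP o h s a) (k + 1))) *
          (if cnt (visP o h s a) k = 0 then (M.H : ℝ) else M.r h s a)
          = (1 - lr M.H (cnt (visP o h s a) (k + 1))) * M.r h s a := by
        by_cases h0 : cnt (visP o h s a) k = 0
        · rw [hc, h0]; simp only [zero_add, lr_one]; ring
        · rw [if_neg h0]
      field_simp
      linear_combination hr
    · have hc : cnt (visP o h s a) (k + 1) = cnt (visP o h s a) k := by
        simp only [cnt]; rw [if_neg hv, add_zero]
      rw [if_neg hv, if_neg hv, if_neg hv, if_neg hv, hc,
        o.BR_upd (k + 1) (by simp; omega) h hh s a, if_neg hv]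

/-! ### Monotonicity -/

lemma Q_anti (o : QLAlg M K cb δ) (h : ℕ) (hh : h ∈ Icc 1 M.H) (s : S) (a : A) (k : ℕ) (hk : k ∈ Icc 1 K) :
    o.Q (k + 1) h s a ≤ o.Q k h s a := by
  rw [o.Q_upd k hk h hh s a]
  split_ifs
  · exact (min_le_right _ _).trans (min_le_right _ _)
  · exact le_rfl

lemma V_eq (o : QLAlg M K cb δ) (h : ℕ) (hh : h ∈ Icc 1 M.H) (s : S) (k : ℕ) (hk : k ≤ K) :
    o.V (k + 1) h s = Finset.univ.sup' Finset.univ_nonempty (fun a => o.Q (k + 1) h s a) := by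
  induction k with
  | zero => simp [o.V_init h hh, o.Q_init h hh]
  | succ k ih =>
    rw [o.V_upd (k + 1) (by simp; omega) h hh s]
    split_ifs with hs
    · rfl
    · rw [ih (by omega)]
      congr 1
      funext a
      rw [o.Q_upd (k + 1) (by simp; omega) h hh s a, if_neg (fun hx => hs hx.1)]

lemma V_anti1 (o : QLAlg M K cb δ) (h : ℕ) (hh : h ∈ Icc 1 (M.H + 1)) (s : S) (k : ℕ) (hk : k ∈ Icc 1 K) :
    o.V (k + 1) h s ≤ o.V k h s := by
  by_cases h1 : h = M.H + 1
  · subst h1; rw [(o.V_terminal _ _).1, (o.V_terminal _ _).1]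
  have hh' : h ∈ Icc 1 M.H := by simp at hh ⊢; omega
  have hk' := Finset.mem_Icc.1 hk
  obtain ⟨j, rfl⟩ : ∃ j, k = j + 1 := ⟨k - 1, by omega⟩
  rw [V_eq o h hh' s _ hk'.2, V_eq o h hh' s j (by omega)]
  apply Finset.sup'_mono_fun
  intro a _
  exact Q_anti o h hh' s a _ hk

lemma VLCB_mono1 (o : QLAlg M K cb δ) (h : ℕ) (hh : h ∈ Icc 1 M.H) (s : S) (k : ℕ) (hk : k ∈ Icc 1 K) :
    o.VLCB k h s ≤ o.VLCB (k + 1) h s := by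
  rw [o.VLCB_upd k hk h hh s]
  split_ifs
  · exact le_max_right _ _
  · exact le_rfl

lemma V_le (o : QLAlg M K cb δ) (h : ℕ) (hh : h ∈ Icc 1 (M.H + 1)) (s : S) (k : ℕ) (hk : k ≤ K) :
    o.V (k + 1) h s ≤ M.H := by
  induction k with
  | zero =>
    by_cases h1 : h = M.H + 1
    · subst h1; rw [(o.V_terminal _ _).1]; positivity
    · rw [o.V_init h (by simp at hh ⊢; omega) s]
  | succ k ih => exact (V_anti1 o h hh s _ (by simp; omega)).trans (ih (by omega))

/-- The reference value dominates the running value. -/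
lemma VR_ge (o : QLAlg M K cb δ) (h : ℕ) (hh : h ∈ Icc 1 (M.H + 1)) (s : S) (k : ℕ) (hk : k ≤ K) :
    o.V (k + 1) h s ≤ o.VR (k + 1) h s := by
  by_cases h1 : h = M.H + 1
  · subst h1; rw [(o.V_terminal _ _).1, (o.V_terminal _ _).2.1]
  have hh' : h ∈ Icc 1 M.H := by simp at hh ⊢; omega
  induction k with
  | zero => rw [o.V_init h hh', o.VR_init h hh']
  | succ k ih =>
    have hk1 : k + 1 ∈ Icc 1 K := by simp; omega
    have hV := V_anti1 o h hh s _ hk1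
    by_cases hs : s = o.st (k + 1) h
    · subst hs
      by_cases hu : (1 < o.V (k + 1 + 1) h (o.st (k + 1) h) - o.VLCB (k + 1 + 1) h (o.st (k + 1) h) ∨
          o.uref (k + 1) h (o.st (k + 1) h))
      · rw [o.VR_upd_pos _ hk1 h hh' hu]
      · rw [o.VR_upd_neg _ hk1 h hh' hu]; exact hV.trans (ih (by omega))
    · rw [o.VR_upd_other _ hk1 h hh' s hs]; exact hV.trans (ih (by omega))

lemma VR_anti1 (o : QLAlg M K cb δ) (h : ℕ) (hh : h ∈ Icc 1 (M.H + 1)) (s : S) (k : ℕ) (hk : k ∈ Icc 1 K) :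
    o.VR (k + 1) h s ≤ o.VR k h s := by
  by_cases h1 : h = M.H + 1
  · subst h1; rw [(o.V_terminal _ _).2.1, (o.V_terminal _ _).2.1]
  have hh' : h ∈ Icc 1 M.H := by simp at hh ⊢; omega
  have hk' := Finset.mem_Icc.1 hk
  obtain ⟨j, rfl⟩ : ∃ j, k = j + 1 := ⟨k - 1, by omega⟩
  have hV := V_anti1 o h hh s _ hk
  have hg := VR_ge o h hh s j (by omega)
  by_cases hs : s = o.st (j + 1) h
  · subst hs
    by_cases hu : (1 < o.V (j + 1 + 1) h (o.st (j + 1) h) - o.VLCB (j + 1 + 1) h (o.st (j + 1) h) ∨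
        o.uref (j + 1) h (o.st (j + 1) h))
    · rw [o.VR_upd_pos _ hk h hh' hu]; linarith
    · rw [o.VR_upd_neg _ hk h hh' hu]
  · rw [o.VR_upd_other _ hk h hh' s hs]

lemma VR_le (o : QLAlg M K cb δ) (h : ℕ) (hh : h ∈ Icc 1 (M.H + 1)) (s : S) (k : ℕ) (hk : k ≤ K) :
    o.VR (k + 1) h s ≤ M.H := by
  induction k with
  | zero =>
    by_cases h1 : h = M.H + 1
    · subst h1; rw [(o.V_terminal _ _).2.1]; positivity
    · rw [o.VR_init h (by simp at hh ⊢; omega) s]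
  | succ k ih => exact (VR_anti1 o h hh s _ (by simp; omega)).trans (ih (by omega))

lemma VR_anti (o : QLAlg M K cb δ) (h : ℕ) (hh : h ∈ Icc 1 (M.H + 1)) (s : S) (i j : ℕ) (hi : 1 ≤ i)
    (hij : i ≤ j) (hj : j ≤ K + 1) : o.VR j h s ≤ o.VR i h s := by
  induction j, hij using Nat.le_induction with
  | base => exact le_rfl
  | succ j hij ih => exact (VR_anti1 o h hh s j (by simp; omega)).trans (ih (by omega))

/-- The reference value is either equal to the current value (flag on) or settled within
one of the lower confidence value. -/
lemma settle (o : QLAlg M K cb δ) (h : ℕ) (hh : h ∈ Icc 1 M.H) (s : S) (k : ℕ) (hk : k ≤ K) :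
    (o.uref (k + 1) h s ∧ o.VR (k + 1) h s = o.V (k + 1) h s) ∨
      (¬ o.uref (k + 1) h s ∧ o.VR (k + 1) h s - o.VLCB (k + 1) h s ≤ 1) := by
  induction k with
  | zero => exact Or.inl ⟨o.uref_init _ _, by rw [o.V_init h hh, o.VR_init h hh]⟩
  | succ k ih =>
    have hk1 : k + 1 ∈ Icc 1 K := by simp; omega
    have hL := VLCB_mono1 o h hh s _ hk1
    by_cases hs : s = o.st (k + 1) h
    · subst hs
      by_cases hg : 1 < o.V (k + 1 + 1) h (o.st (k + 1) h) - o.VLCB (k + 1 + 1) h (o.st (k + 1) h)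
      · exact Or.inl ⟨o.uref_upd_pos _ hk1 h hh hg, o.VR_upd_pos _ hk1 h hh (Or.inl hg)⟩
      · refine Or.inr ⟨o.uref_upd_neg _ hk1 h hh hg, ?_⟩
        rcases ih (by omega) with h1 | h1
        · rw [o.VR_upd_pos _ hk1 h hh (Or.inr h1.1)]; linarith
        · rw [o.VR_upd_neg _ hk1 h hh (not_or.2 ⟨hg, h1.1⟩)]; linarith [h1.2]
    · rw [o.VR_upd_other _ hk1 h hh s hs, o.uref_upd_other _ hk1 h hh s hs, o.V_upd _ hk1 h hh s, if_neg hs]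
      rcases ih (by omega) with h1 | h1
      · exact Or.inl h1
      · exact Or.inr ⟨h1.1, by linarith [h1.2]⟩

end Closed

/-! ### Concentration in terms of empirical quantities -/

section Conc
variable {S A : Type} [Fintype S] [Fintype A] [Nonempty S] [Nonempty A]
  [DecidableEq S] [DecidableEq A] {M : MDP S A} {K : ℕ} {cb δ : ℝ}

lemma ws_abs_le (vis : ℕ → Prop) [DecidablePred vis] {w y : ℕ → ℝ} {k : ℕ} (b : ℝ)
    (hw : ∀ n, 0 ≤ w n) (hy : ∀ i ∈ Icc 1 k, |y i| ≤ b) :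
    |ws vis w y k| ≤ ws vis w (fun _ => b) k := by
  rw [abs_le]
  constructor
  · have h1 : ws vis w (fun _ => -1 * b) k ≤ ws vis w y k := by
      apply ws_mono
      intro i hi _
      apply mul_le_mul_of_nonneg_left _ (hw _)
      have := (abs_le.1 (hy i hi)).1
      linarith
    rw [ws_smul vis w (fun _ => b)] at h1
    linarith
  · apply ws_mono
    intro i hi _
    exact mul_le_mul_of_nonneg_left (abs_le.1 (hy i hi)).2 (hw _)

/-- Jensen for weights summing to one. -/
lemma ws_jensen (vis : ℕ → Prop) [DecidablePred vis] (w y : ℕ → ℝ) (k : ℕ)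
    (hw : ∀ n, 0 ≤ w n) (h1 : ws vis w (fun _ => 1) k = 1) :
    (ws vis w y k) ^ 2 ≤ ws vis w (fun i => y i ^ 2) k := by
  set m := ws vis w y k with hm
  have h0 : 0 ≤ ws vis w (fun i => (y i - m) ^ 2) k :=
    ws_nonneg vis fun i _ _ => mul_nonneg (hw _) (sq_nonneg _)
  have h2 : ws vis w (fun i => (y i - m) ^ 2) k
      = ws vis w (fun i => y i ^ 2) k - 2 * m * m + m ^ 2 * 1 := by
    have e : (fun i => (y i - m) ^ 2) = fun i => (y i ^ 2 - (2 * m) * y i) + m ^ 2 * 1 := by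
      funext i; ring
    rw [e, ws_add vis w (fun i => y i ^ 2 - (2 * m) * y i), ws_sub vis w (fun i => y i ^ 2),
      ws_smul vis w y, ws_smul vis w (fun _ => 1), h1]
  linarith

lemma sqrt_mul_le (a b : ℝ) (ha : 0 ≤ a) : Real.sqrt (a * b) = Real.sqrt a * Real.sqrt b :=
  Real.sqrt_mul ha b

lemma coarse (o : QLAlg M K cb δ) (x : ℝ) (hx : 1 / 4 ≤ x) (good : GoodEv o x) (h : ℕ)
    (hh : h ∈ Icc 1 M.H) (s : S) (a : A) (k : ℕ) (hk : k ≤ K) (hN : 1 ≤ cnt (visP o h s a) k)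
    (c : Fin 5) (d : Fin 3)
    (h1 : ws (visP o h s a) (wt M.H (cnt (visP o h s a) k) d) (fun _ => 1) k = 1)
    (q : ℝ) (hq : q = Real.sqrt (wm M.H (cnt (visP o h s a) k) d * x)) :
    |ws (visP o h s a) (wt M.H (cnt (visP o h s a) k) d)
      (fun i => fam o c h i (o.st i (h + 1)) - ∑ t, M.P h s a t * fam o c h i t) k|
      ≤ fb M.H c * (2 * q + 2 * q ^ 2) := by
  have h2 := freedman_det o x hx good h hh s a k hk hN c d
  have hwm := wm_pos M.H (cnt (visP o h s a) k) d M.H_pos hN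
  have hfb := fb_pos M.H c M.H_pos
  set W := wm M.H (cnt (visP o h s a) k) d
  set w := wt M.H (cnt (visP o h s a) k) d
  set b := fb M.H c
  have hq2 : q ^ 2 = W * x := by rw [hq, Real.sq_sqrt (by positivity)]
  have hq0 : 0 ≤ q := by rw [hq]; positivity
  have hA : ws (visP o h s a) w (fun i => M.varP h s a (fam o c h i)) k ≤ b ^ 2 := by
    calc _ ≤ ws (visP o h s a) w (fun i => b ^ 2 * 1) k := by
          apply ws_mono
          intro i _ _
          apply mul_le_mul_of_nonneg_left _ (wt_nonneg _ _ _ _)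
          rw [mul_one]
          exact varP_le M h s a _ _ (fam_bound o c h i)
      _ = b ^ 2 := by rw [ws_smul (visP o h s a) w (fun _ => 1), h1, mul_one]
  have h3 : Real.sqrt (W * x * ws (visP o h s a) w (fun i => M.varP h s a (fam o c h i)) k) ≤ q * b := by
    calc _ ≤ Real.sqrt ((q * b) ^ 2) := by
          apply Real.sqrt_le_sqrt
          rw [mul_pow, hq2]
          have : 0 ≤ W * x := by positivity
          gcongr
      _ = q * b := Real.sqrt_sq (by positivity)
  calc _ ≤ _ := h2
    _ ≤ 2 * (q * b) + 2 * (W * x) * b := by linarith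
    _ = _ := by rw [← hq2]; ring

lemma P_sub (M : MDP S A) (h : ℕ) (s : S) (a : A) (f g : S → ℝ) :
    ∑ t, M.P h s a t * (f t - g t) = ∑ t, M.P h s a t * f t - ∑ t, M.P h s a t * g t := by
  rw [← Finset.sum_sub_distrib]
  exact Finset.sum_congr rfl fun t _ => by ring

lemma real_dev (X q Av Emp H : ℝ) (hq : 0 ≤ q) (hq1 : q ≤ 1) (hH : 0 ≤ H)
    (hX : X ≤ 2 * Real.sqrt (q ^ 2 * (2 * Av)) + 2 * q ^ 2 * H)
    (hA : Av ≤ Emp + 12 * H ^ 2 * q) :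
    X ≤ 3 * q * Real.sqrt Emp + 13 * H * (q * Real.sqrt q) := by
  set p := Real.sqrt q with hp
  have hp0 : 0 ≤ p := Real.sqrt_nonneg _
  have hpq : p ^ 2 = q := Real.sq_sqrt hq
  have hp1 : p ≤ 1 := by nlinarith
  set e := Real.sqrt Emp with he
  have he0 : 0 ≤ e := Real.sqrt_nonneg _
  have hee : Emp ≤ e ^ 2 := by
    rcases le_total 0 Emp with h | h
    · rw [he, Real.sq_sqrt h]
    · nlinarith
  have h1 : Real.sqrt (q ^ 2 * (2 * Av)) ≤ q * (3 / 2 * e + 5 * H * p) := by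
    apply Real.sqrt_le_iff.2
    refine ⟨by positivity, ?_⟩
    rw [mul_pow]
    apply mul_le_mul_of_nonneg_left _ (sq_nonneg _)
    have : 0 ≤ e * H * p := by positivity
    have h3 : 0 ≤ H ^ 2 * p ^ 2 := by positivity
    rw [← hpq] at hA
    nlinarith [sq_nonneg e]
  have h2 : q ^ 2 * H ≤ q * p * H := by
    have : q ≤ p := by nlinarith
    rw [sq]; gcongr
  nlinarith

lemma dev_bound (o : QLAlg M K cb δ) (x : ℝ) (hx : 1 / 4 ≤ x) (good : GoodEv o x) (h : ℕ)
    (hh : h ∈ Icc 1 M.H) (s : S) (a : A) (k : ℕ) (hk : k ≤ K) (hN : 1 ≤ cnt (visP o h s a) k)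
    (c c' : Fin 5) (d d' : Fin 3)
    (hc : fb M.H c = M.H) (hc' : fb M.H c' = (M.H : ℝ) ^ 2)
    (hcc : ∀ i t, fam o c' h i t = fam o c h i t ^ 2)
    (h1 : ws (visP o h s a) (wt M.H (cnt (visP o h s a) k) d') (fun _ => 1) k = 1)
    (hdd : ∀ n, wt M.H (cnt (visP o h s a) k) d n ≤ 2 * wt M.H (cnt (visP o h s a) k) d' n)
    (hwm : wm M.H (cnt (visP o h s a) k) d' = wm M.H (cnt (visP o h s a) k) d)
    (q : ℝ) (hq : q = Real.sqrt (wm M.H (cnt (visP o h s a) k) d * x)) :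
    |ws (visP o h s a) (wt M.H (cnt (visP o h s a) k) d)
      (fun i => fam o c h i (o.st i (h + 1)) - ∑ t, M.P h s a t * fam o c h i t) k|
      ≤ 3 * q * Real.sqrt (ws (visP o h s a) (wt M.H (cnt (visP o h s a) k) d')
            (fun i => fam o c h i (o.st i (h + 1)) ^ 2) k
          - (ws (visP o h s a) (wt M.H (cnt (visP o h s a) k) d')
            (fun i => fam o c h i (o.st i (h + 1))) k) ^ 2)
        + 13 * M.H * (q * Real.sqrt q) := by
  have hF := freedman_det o x hx good h hh s a k hk hN c d
  have hC := coarse o x hx good h hh s a k hk hN c d' h1 q (by rw [hwm, hq])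
  have hC' := coarse o x hx good h hh s a k hk hN c' d' h1 q (by rw [hwm, hq])
  have hwp := wm_pos M.H (cnt (visP o h s a) k) d M.H_pos hN
  set v := visP o h s a
  set W := wm M.H (cnt v k) d
  set w := wt M.H (cnt v k) d with hw
  set w' := wt M.H (cnt v k) d' with hw'
  rw [hc] at hF hC
  rw [hc'] at hC'
  have w0 : ∀ n, 0 ≤ w n := fun n => wt_nonneg _ _ _ _
  have w0' : ∀ n, 0 ≤ w' n := fun n => wt_nonneg _ _ _ _
  have hH : (1 : ℝ) ≤ M.H := by exact_mod_cast M.H_pos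
  have hq2 : q ^ 2 = W * x := by rw [hq, Real.sq_sqrt (by positivity)]
  have hq0 : 0 ≤ q := by rw [hq]; positivity
  have fbd : ∀ i t, |fam o c h i t| ≤ M.H := fun i t => hc ▸ fam_bound o c h i t
  have pbd : ∀ i, |∑ t, M.P h s a t * fam o c h i t| ≤ M.H := fun i => PV_bound M h s a _ _ (fbd i)
  have hsum : ∀ b : ℝ, ws v w' (fun _ => b) k = b := by
    intro b
    have := ws_smul v w' (fun _ => 1) b k
    rw [h1, mul_one] at this
    simpa using this
  have hsum2 : ∀ b : ℝ, 0 ≤ b → ws v w (fun _ => b) k ≤ 2 * b := by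
    intro b hb
    calc _ ≤ ws v (fun n => 2 * w' n) (fun _ => b) k := by
          apply ws_mono
          intro i _ _
          exact mul_le_mul_of_nonneg_right (hdd _) hb
      _ = _ := by rw [ws_smul_w, hsum]
  rcases le_or_gt q 1 with hq1 | hq1
  · set F := fun i => fam o c h i (o.st i (h + 1)) with hFdef
    set Pf := fun i => ∑ t, M.P h s a t * fam o c h i t with hPf
    have hA0 : ws v w (fun i => M.varP h s a (fam o c h i)) k
        ≤ 2 * ws v w' (fun i => M.varP h s a (fam o c h i)) k := by
      rw [← ws_smul_w]
      apply ws_mono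
      intro i _ _
      exact mul_le_mul_of_nonneg_right (hdd _) (varP_nonneg _ _ _ _ _)
    have hg : 2 * q + 2 * q ^ 2 ≤ 4 * q := by nlinarith
    refine real_dev _ q (ws v w' (fun i => M.varP h s a (fam o c h i)) k) _ M.H hq0 hq1 (by positivity) ?_ ?_
    · calc _ ≤ _ := hF
        _ ≤ _ := by
          rw [hq2]
          have : 0 ≤ W * x := by positivity
          have h5 : Real.sqrt (W * x * ws v w (fun i => M.varP h s a (fam o c h i)) k) ≤
            Real.sqrt (W * x * (2 * ws v w' (fun i => M.varP h s a (fam o c h i)) k)) := by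
            apply Real.sqrt_le_sqrt
            gcongr
          linarith
    · have e1 : ws v w' (fun i => M.varP h s a (fam o c h i)) k
          = ws v w' (fun i => ∑ t, M.P h s a t * fam o c' h i t) k - ws v w' (fun i => Pf i ^ 2) k := by
        rw [← ws_sub]
        simp only [hcc, MDP.varP, hPf]
      have e2 := ws_jensen v w' Pf k w0' h1
      have e3 := abs_le.1 hC
      have e4 := abs_le.1 hC'
      rw [ws_sub v w' F Pf] at e3
      rw [ws_sub v w' (fun i => fam o c' h i (o.st i (h + 1)))] at e4
      have e5 : ws v w' (fun i => fam o c' h i (o.st i (h + 1))) k = ws v w' (fun i => F i ^ 2) k := by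
        simp only [hcc, hFdef]
      rw [e5] at e4
      have a1 : |ws v w' F k| ≤ M.H := by
        rw [← hsum M.H]; exact ws_abs_le v _ w0' fun i _ => fbd _ _
      have a2 : |ws v w' Pf k| ≤ M.H := by
        rw [← hsum M.H]; exact ws_abs_le v _ w0' fun i _ => pbd _
      have hHg : M.H * (2 * q + 2 * q ^ 2) ≤ M.H * (4 * q) := by gcongr
      have hHg2 : (M.H : ℝ) ^ 2 * (2 * q + 2 * q ^ 2) ≤ (M.H : ℝ) ^ 2 * (4 * q) := by gcongr
      have a3 : (ws v w' F k) ^ 2 - (ws v w' Pf k) ^ 2 ≤ 2 * M.H * (M.H * (4 * q)) := by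
        calc _ = (ws v w' F k + ws v w' Pf k) * (ws v w' F k - ws v w' Pf k) := by ring
          _ ≤ |(ws v w' F k + ws v w' Pf k) * (ws v w' F k - ws v w' Pf k)| := le_abs_self _
          _ = |ws v w' F k + ws v w' Pf k| * |ws v w' F k - ws v w' Pf k| := abs_mul _ _
          _ ≤ _ := by
            gcongr
            · exact (abs_add_le _ _).trans (by linarith)
            · rw [abs_le]; constructor <;> linarith [e3.1, e3.2]
      rw [e1]
      have := e4.1
      nlinarith
  · have hp1 : 1 ≤ Real.sqrt q := Real.one_le_sqrt.2 hq1.le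
    have b1 : |ws v w (fun i => fam o c h i (o.st i (h + 1)) - ∑ t, M.P h s a t * fam o c h i t) k|
        ≤ 2 * (2 * M.H) := by
      refine (ws_abs_le v (2 * (M.H : ℝ)) w0 fun i _ => ?_).trans (hsum2 _ (by positivity))
      have := fbd i (o.st i (h + 1))
      have := pbd i
      exact (abs_sub _ _).trans (by linarith)
    have b2 : 1 ≤ q * Real.sqrt q := by nlinarith
    have b3 : 0 ≤ 3 * q * Real.sqrt (ws v w' (fun i => fam o c h i (o.st i (h + 1)) ^ 2) k
      - (ws v w' (fun i => fam o c h i (o.st i (h + 1))) k) ^ 2) := by positivity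
    have b4 : 13 * (M.H : ℝ) * 1 ≤ 13 * M.H * (q * Real.sqrt q) := by gcongr
    linarith

/-- Hoeffding-type deviation of the optimal value function. -/
lemma hoeff_bound (o : QLAlg M K cb δ) (x : ℝ) (hx : 1 / 4 ≤ x) (good : GoodEv o x) (h : ℕ)
    (hh : h ∈ Icc 1 M.H) (s : S) (a : A) (k : ℕ) (hk : k ≤ K) (hN : 1 ≤ cnt (visP o h s a) k) :
    |ws (visP o h s a) (ew M.H (cnt (visP o h s a) k))
      (fun i => M.Vstar (h + 1) (o.st i (h + 1)) - ∑ t, M.P h s a t * M.Vstar (h + 1) t) k|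
      ≤ 4 * M.H * Real.sqrt (2 * M.H / (cnt (visP o h s a) k) * x) := by
  set q := Real.sqrt (2 * M.H / (cnt (visP o h s a) k) * x) with hq
  have h1 := ew_ws_one (visP o h s a) M.H k 1 hN
  have hC : |ws (visP o h s a) (ew M.H (cnt (visP o h s a) k))
      (fun i => M.Vstar (h + 1) (o.st i (h + 1)) - ∑ t, M.P h s a t * M.Vstar (h + 1) t) k|
      ≤ M.H * (2 * q + 2 * q ^ 2) := coarse o x hx good h hh s a k hk hN 0 0 h1 q hq
  have hH : (1 : ℝ) ≤ M.H := by exact_mod_cast M.H_pos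
  have hq0 : 0 ≤ q := Real.sqrt_nonneg _
  rcases le_or_gt q 1 with hq1 | hq1
  · refine hC.trans ?_
    have hg : 2 * q + 2 * q ^ 2 ≤ 4 * q := by nlinarith
    calc _ ≤ M.H * (4 * q) := by gcongr
      _ = _ := by ring
  · have b1 : |ws (visP o h s a) (ew M.H (cnt (visP o h s a) k))
      (fun i => M.Vstar (h + 1) (o.st i (h + 1)) - ∑ t, M.P h s a t * M.Vstar (h + 1) t) k|
        ≤ 2 * M.H := by
      refine (ws_abs_le _ (2 * (M.H : ℝ)) (fun n => ew_nonneg _ _ _) fun i _ => ?_).trans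
        (ew_ws_one _ M.H k (2 * M.H) hN).le
      have fbd : ∀ t, |M.Vstar (h + 1) t| ≤ M.H := fun t => fam_bound o 0 h i t
      have := fbd (o.st i (h + 1))
      have := PV_bound M h s a _ _ fbd
      exact (abs_sub _ _).trans (by linarith)
    nlinarith

end Conc

/-! ### Optimism and pessimism -/

lemma real_low (H ι N q : ℝ) (hH : 1 ≤ H) (hι : 1 / 2 ≤ ι) (hN : 1 ≤ N) (hq0 : 0 ≤ q)
    (hq : q ^ 2 ≤ 14 * H * ι / N) :
    q * Real.sqrt q ≤ 14 * H * ι / N ^ ((3 : ℝ) / 4) := by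
  set p := Real.sqrt q with hp
  have hp0 : 0 ≤ p := Real.sqrt_nonneg _
  have hpq : p ^ 2 = q := Real.sq_sqrt hq0
  set n := N ^ ((1 : ℝ) / 4) with hn
  have hn0 : 0 < n := by positivity
  have n3 : N ^ ((3 : ℝ) / 4) = n ^ 3 := by
    rw [hn, ← Real.rpow_natCast, ← Real.rpow_mul (by linarith)]; norm_num
  have n4 : N = n ^ 4 := by
    rw [hn, ← Real.rpow_natCast, ← Real.rpow_mul (by linarith)]; norm_num
  rw [n3, le_div_iff₀ (by positivity)]
  rw [n4, le_div_iff₀ (by positivity)] at hq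
  rw [← hpq] at hq ⊢
  have e : p ^ 2 * p * n ^ 3 = (p * n) ^ 3 := by ring
  rw [e]
  have e' : (p ^ 2) ^ 2 * n ^ 4 = (p * n) ^ 4 := by ring
  rw [e'] at hq
  have hy0 : 0 ≤ p * n := by positivity
  have hz : 1 ≤ 14 * H * ι := by nlinarith
  rcases le_total (p * n) 1 with h | h
  · exact (pow_le_one₀ hy0 h).trans hz
  · exact (pow_le_pow_right₀ h (by norm_num)).trans hq

section Opt
variable {S A : Type} [Fintype S] [Fintype A] [Nonempty S] [Nonempty A]
  [DecidableEq S] [DecidableEq A] {M : MDP S A} {K : ℕ} {cb δ : ℝ}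

/-- A lower bound on a weighted sum of an antitone function of the counter. -/
lemma ew_ws_anti_ge (v : ℕ → Prop) [DecidablePred v] (H k : ℕ) (f : ℕ → ℝ) (hN : 1 ≤ cnt v k)
    (hf : ∀ n, 1 ≤ n → n ≤ cnt v k → f (cnt v k) ≤ f n) :
    f (cnt v k) ≤ ws v (ew H (cnt v k)) (fun i => f (cnt v i)) k := by
  calc f (cnt v k) = ws v (ew H (cnt v k)) (fun _ => f (cnt v k)) k := (ew_ws_one v H k _ hN).symm
    _ ≤ _ := by
      apply ws_mono
      intro i hi hv
      have hi' := Finset.mem_Icc.1 hi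
      exact mul_le_mul_of_nonneg_left
        (hf _ (cnt_pos_of_vis v hi'.1 hv) (cnt_mono v hi'.2)) (ew_nonneg _ _ _)

lemma bonus_ge (o : QLAlg M K cb δ) (hι : 1 / 2 ≤ iota S A K M.H δ) (hcb : 1000 ≤ cb) (h : ℕ)
    (s : S) (a : A) (k : ℕ) (hN : 1 ≤ cnt (visP o h s a) k) :
    4 * M.H * Real.sqrt (2 * M.H / (cnt (visP o h s a) k) * (7 * iota S A K M.H δ)) ≤
      ws (visP o h s a) (ew M.H (cnt (visP o h s a) k))
        (fun i => cb * Real.sqrt ((M.H : ℝ) ^ 3 * iota S A K M.H δ / (cnt (visP o h s a) i))) k := by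
  have hH : (1 : ℝ) ≤ M.H := by exact_mod_cast M.H_pos
  have hN1 : (1 : ℝ) ≤ cnt (visP o h s a) k := by exact_mod_cast hN
  refine le_trans ?_ (ew_ws_anti_ge (visP o h s a) M.H k
    (fun n => cb * Real.sqrt ((M.H : ℝ) ^ 3 * iota S A K M.H δ / n)) hN ?_)
  · have e : 4 * (M.H : ℝ) * Real.sqrt (2 * M.H / (cnt (visP o h s a) k) * (7 * iota S A K M.H δ))
        = Real.sqrt (224 * ((M.H : ℝ) ^ 3 * iota S A K M.H δ / (cnt (visP o h s a) k))) := by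
      rw [← Real.sqrt_sq (by positivity : 0 ≤ 4 * (M.H : ℝ)), ← Real.sqrt_mul (by positivity)]
      congr 1
      field_simp
      ring
    rw [e]
    calc _ ≤ Real.sqrt (cb ^ 2 * ((M.H : ℝ) ^ 3 * iota S A K M.H δ / (cnt (visP o h s a) k))) := by
          apply Real.sqrt_le_sqrt
          have : 0 ≤ (M.H : ℝ) ^ 3 * iota S A K M.H δ / (cnt (visP o h s a) k) := by positivity
          gcongr
          nlinarith
      _ = _ := by rw [Real.sqrt_mul (by positivity), Real.sqrt_sq (by linarith)]
  · intro n hn hn2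
    have : (0 : ℝ) < n := by exact_mod_cast hn
    have : (n : ℝ) ≤ cnt (visP o h s a) k := by exact_mod_cast hn2
    have : 0 ≤ (M.H : ℝ) ^ 3 * iota S A K M.H δ := by positivity
    gcongr

lemma QUCB_opt (o : QLAlg M K cb δ) (hι : 1 / 2 ≤ iota S A K M.H δ) (hcb : 1000 ≤ cb)
    (good : GoodEv o (7 * iota S A K M.H δ)) (h : ℕ)
    (hh : h ∈ Icc 1 M.H) (s : S) (a : A) (k : ℕ) (hk : k ≤ K)
    (hV : ∀ i ∈ Icc 1 k, ∀ t, M.Vstar (h + 1) t ≤ o.V i (h + 1) t) :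
    M.Qstar h s a ≤ o.QUCB (k + 1) h s a := by
  rw [QUCB_eq o h hh s a k hk]
  by_cases h0 : cnt (visP o h s a) k = 0
  · rw [if_pos h0, ws_of_cnt_zero _ _ _ _ h0, add_zero]
    exact (Qstar_bounds M h (Finset.mem_Icc.1 hh).1 s a).2
  rw [if_neg h0, Qstar_bellman M h hh s a]
  have hN : 1 ≤ cnt (visP o h s a) k := by omega
  have h1 := abs_le.1 (hoeff_bound o (7 * iota S A K M.H δ) (by linarith) good h hh s a k hk hN)
  have h2 := bonus_ge o hι hcb h s a k hN
  rw [ws_add, ws_sub (visP o h s a) _ (fun i => M.Vstar (h + 1) (o.st i (h + 1)))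
    (fun _ => ∑ t, M.P h s a t * M.Vstar (h + 1) t), ew_ws_one _ _ _ _ hN] at *
  have h3 : ws (visP o h s a) (ew M.H (cnt (visP o h s a) k))
      (fun i => M.Vstar (h + 1) (o.st i (h + 1))) k ≤
      ws (visP o h s a) (ew M.H (cnt (visP o h s a) k)) (fun i => o.V i (h + 1) (o.st i (h + 1))) k := by
    apply ws_mono
    intro i hi _
    exact mul_le_mul_of_nonneg_left (hV i hi _) (ew_nonneg _ _ _)
  linarith [h1.1]

lemma QLCB_pess (o : QLAlg M K cb δ) (hι : 1 / 2 ≤ iota S A K M.H δ) (hcb : 1000 ≤ cb)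
    (good : GoodEv o (7 * iota S A K M.H δ)) (h : ℕ)
    (hh : h ∈ Icc 1 M.H) (s : S) (a : A) (k : ℕ) (hk : k ≤ K)
    (hV : ∀ i ∈ Icc 1 k, ∀ t, o.VLCB i (h + 1) t ≤ M.Vstar (h + 1) t) :
    o.QLCB (k + 1) h s a ≤ M.Qstar h s a := by
  rw [QLCB_eq o h hh s a k hk]
  by_cases h0 : cnt (visP o h s a) k = 0
  · rw [if_pos h0, ws_of_cnt_zero _ _ _ _ h0, add_zero]
    exact (Qstar_bounds M h (Finset.mem_Icc.1 hh).1 s a).1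
  rw [if_neg h0, Qstar_bellman M h hh s a]
  have hN : 1 ≤ cnt (visP o h s a) k := by omega
  have h1 := abs_le.1 (hoeff_bound o (7 * iota S A K M.H δ) (by linarith) good h hh s a k hk hN)
  have h2 := bonus_ge o hι hcb h s a k hN
  rw [ws_sub (visP o h s a) _ (fun i => M.Vstar (h + 1) (o.st i (h + 1)))
    (fun _ => ∑ t, M.P h s a t * M.Vstar (h + 1) t), ew_ws_one _ _ _ _ hN] at h1
  rw [ws_sub (visP o h s a) _ (fun i => o.VLCB i (h + 1) (o.st i (h + 1)))]
  have h3 : ws (visP o h s a) (ew M.H (cnt (visP o h s a) k))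
      (fun i => o.VLCB i (h + 1) (o.st i (h + 1))) k ≤
      ws (visP o h s a) (ew M.H (cnt (visP o h s a) k))
      (fun i => M.Vstar (h + 1) (o.st i (h + 1))) k := by
    apply ws_mono
    intro i hi _
    exact mul_le_mul_of_nonneg_left (hV i hi _) (ew_nonneg _ _ _)
  linarith [h1.2]

lemma QR_opt (o : QLAlg M K cb δ) (hι : 1 / 2 ≤ iota S A K M.H δ) (hcb : 1000 ≤ cb)
    (good : GoodEv o (7 * iota S A K M.H δ)) (h : ℕ)
    (hh : h ∈ Icc 1 M.H) (s : S) (a : A) (k : ℕ) (hk : k ≤ K)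
    (hV : ∀ i ∈ Icc 1 k, ∀ t, M.Vstar (h + 1) t ≤ o.V i (h + 1) t) :
    M.Qstar h s a ≤ o.QR (k + 1) h s a := by
  have hBR := BR_eq o h hh s a k hk
  rw [QR_eq o h hh s a k hk]
  by_cases h0 : cnt (visP o h s a) k = 0
  · rw [if_pos h0, ws_of_cnt_zero _ _ _ _ h0, ws_of_cnt_zero _ _ _ _ h0, ws_of_cnt_zero _ _ _ _ h0,
      hBR, h0]
    simp only [Nat.cast_zero, div_zero, Real.sqrt_zero, mul_zero, zero_mul, add_zero]
    exact (Qstar_bounds M h (Finset.mem_Icc.1 hh).1 s a).2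
  rw [if_neg h0, Qstar_bellman M h hh s a]
  have hN : 1 ≤ cnt (visP o h s a) k := by omega
  have hH : (1 : ℝ) ≤ M.H := by exact_mod_cast M.H_pos
  have hN1 : (1 : ℝ) ≤ cnt (visP o h s a) k := by exact_mod_cast hN
  have hh1 : h + 1 ∈ Icc 1 (M.H + 1) := by simp at hh ⊢; omega
  set ι := iota S A K M.H δ with hιdef
  set v := visP o h s a with hvdef
  set n := cnt v k with hn
  -- clipping is inactive
  have cV : ∀ i ∈ Icc 1 k, ∀ t, clip M.H (o.V i (h + 1) t) = o.V i (h + 1) t ∧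
      clip M.H (o.VR i (h + 1) t) = o.VR i (h + 1) t := by
    intro i hi t
    have hi' := Finset.mem_Icc.1 hi
    obtain ⟨j, rfl⟩ : ∃ j, i = j + 1 := ⟨i - 1, by omega⟩
    have a1 := hV _ hi t
    have a2 := (Vstar_bounds M (h + 1) (by omega) t).1
    have a3 := VR_ge o (h + 1) hh1 t j (by omega)
    exact ⟨clip_eq _ _ (by linarith) (V_le o (h + 1) hh1 t j (by omega)),
      clip_eq _ _ (by linarith) (VR_le o (h + 1) hh1 t j (by omega))⟩
  have f1 : ∀ i ∈ Icc 1 k, ∀ t, fam o 1 h i t = o.V i (h + 1) t - o.VR i (h + 1) t := by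
    intro i hi t; simp only [fam]; rw [(cV i hi t).1, (cV i hi t).2]
  have f3 : ∀ i ∈ Icc 1 k, ∀ t, fam o 3 h i t = o.VR i (h + 1) t := by
    intro i hi t; simp only [fam]; rw [(cV i hi t).2]
  set qe := Real.sqrt (wm M.H n 0 * (7 * ι)) with hqe
  set qc := Real.sqrt (wm M.H n 1 * (7 * ι)) with hqc
  have D1 := dev_bound o (7 * ι) (by linarith) good h hh s a k hk hN 1 2 0 0 rfl rfl (fun _ _ => rfl)
    (ew_ws_one v M.H k 1 hN) (fun m => by have := wt_nonneg M.H n 0 m; linarith) rfl qe hqe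
  have D2 := dev_bound o (7 * ι) (by linarith) good h hh s a k hk hN 3 4 1 2 rfl rfl (fun _ _ => rfl)
    (uw_ws_one v k 1 hN) (fun m => by
      change cw M.H n m ≤ 2 * uw n m
      by_cases hm : m ≤ n
      · have := cw_le M.H n m M.H_pos hN
        unfold uw; rw [if_pos hm]; linarith [this, (by ring : 2 * (1 / (n : ℝ)) = 2 / n)]
      · rw [cw_zero_of_lt _ _ _ (by omega), uw_zero_of_lt _ _ (by omega)]; simp) rfl qc hqc
  change |ws v (ew M.H n) (fun i => fam o 1 h i (o.st i (h + 1)) - ∑ t, M.P h s a t * fam o 1 h i t) k|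
    ≤ 3 * qe * Real.sqrt (ws v (ew M.H n) (fun i => fam o 1 h i (o.st i (h + 1)) ^ 2) k
      - (ws v (ew M.H n) (fun i => fam o 1 h i (o.st i (h + 1))) k) ^ 2) + 13 * M.H * (qe * Real.sqrt qe) at D1
  change |ws v (cw M.H n) (fun i => fam o 3 h i (o.st i (h + 1)) - ∑ t, M.P h s a t * fam o 3 h i t) k|
    ≤ 3 * qc * Real.sqrt (ws v (uw n) (fun i => fam o 3 h i (o.st i (h + 1)) ^ 2) k
      - (ws v (uw n) (fun i => fam o 3 h i (o.st i (h + 1))) k) ^ 2) + 13 * M.H * (qc * Real.sqrt qc) at D2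
  rw [ws_congr v (y := fun i => fam o 1 h i (o.st i (h + 1)) ^ 2)
      (w' := ew M.H n) (y' := fun i => (o.V i (h + 1) (o.st i (h + 1)) - o.VR i (h + 1) (o.st i (h + 1))) ^ 2)
      (fun i hi _ => by rw [f1 i hi]),
    ws_congr v (y := fun i => fam o 1 h i (o.st i (h + 1)))
      (w' := ew M.H n) (y' := fun i => o.V i (h + 1) (o.st i (h + 1)) - o.VR i (h + 1) (o.st i (h + 1)))
      (fun i hi _ => by rw [f1 i hi]),
    ws_congr v (y := fun i => fam o 1 h i (o.st i (h + 1)) - ∑ t, M.P h s a t * fam o 1 h i t)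
      (w' := ew M.H n) (y' := fun i => (o.V i (h + 1) (o.st i (h + 1)) - o.VR i (h + 1) (o.st i (h + 1)))
        - (∑ t, M.P h s a t * o.V i (h + 1) t - ∑ t, M.P h s a t * o.VR i (h + 1) t))
      (fun i hi _ => by
        rw [f1 i hi, ← P_sub]
        simp only [f1 i hi]),
    ← sigAdv_eq o h hh s a k hk, ← muAdv_eq o h hh s a k hk,
    ws_sub v _ (fun i => o.V i (h + 1) (o.st i (h + 1)) - o.VR i (h + 1) (o.st i (h + 1))),
    ws_sub v _ (fun i => ∑ t, M.P h s a t * o.V i (h + 1) t)] at D1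
  rw [ws_congr v (y := fun i => fam o 3 h i (o.st i (h + 1)) ^ 2)
      (w' := uw n) (y' := fun i => (o.VR i (h + 1) (o.st i (h + 1))) ^ 2)
      (fun i hi _ => by rw [f3 i hi]),
    ws_congr v (y := fun i => fam o 3 h i (o.st i (h + 1)))
      (w' := uw n) (y' := fun i => o.VR i (h + 1) (o.st i (h + 1)))
      (fun i hi _ => by rw [f3 i hi]),
    ws_congr v (y := fun i => fam o 3 h i (o.st i (h + 1)) - ∑ t, M.P h s a t * fam o 3 h i t)
      (w' := cw M.H n) (y' := fun i => o.VR i (h + 1) (o.st i (h + 1))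
        - ∑ t, M.P h s a t * o.VR i (h + 1) t)
      (fun i hi _ => by simp only [f3 i hi]),
    ← sigRef_eq o h hh s a k hk, ← muRef_eq o h hh s a k hk,
    ws_sub v _ (fun i => o.VR i (h + 1) (o.st i (h + 1)))] at D2
  -- bias terms
  have g1 : ∑ t, M.P h s a t * M.Vstar (h + 1) t ≤
      ws v (ew M.H n) (fun i => ∑ t, M.P h s a t * o.V i (h + 1) t) k := by
    rw [← ew_ws_one v M.H k (∑ t, M.P h s a t * M.Vstar (h + 1) t) hN]
    apply ws_mono
    intro i hi _
    exact mul_le_mul_of_nonneg_left (PV_mono M h s a _ _ (hV i hi)) (ew_nonneg _ _ _)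
  have g2 : ws v (ew M.H n) (fun i => ∑ t, M.P h s a t * o.VR i (h + 1) t) k ≤
      ws v (cw M.H n) (fun i => ∑ t, M.P h s a t * o.VR i (h + 1) t) k := by
    apply cw_ge_ew
    intro i j hi hij hj
    exact PV_mono M h s a _ _ fun t => VR_anti o (h + 1) hh1 t i j hi hij (by omega)
  -- bonuses
  have qe2 : qe ^ 2 = 14 * M.H * ι / n := by
    rw [hqe, Real.sq_sqrt (by have := wm_pos M.H n 0 M.H_pos hN; positivity)]
    simp only [wm]; ring
  have qc2 : qc ^ 2 = 14 * ι / n := by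
    rw [hqc, Real.sq_sqrt (by have := wm_pos M.H n 1 M.H_pos hN; positivity)]
    simp only [wm]; ring
  have qe0 : 0 ≤ qe := Real.sqrt_nonneg _
  have qc0 : 0 ≤ qc := Real.sqrt_nonneg _
  set u := Real.sqrt (ι / n) with hu
  have u0 : 0 ≤ u := Real.sqrt_nonneg _
  have u2 : u ^ 2 = ι / n := Real.sq_sqrt (by positivity)
  have sH0 : 0 ≤ Real.sqrt (M.H : ℝ) := Real.sqrt_nonneg _
  have sH2 : Real.sqrt (M.H : ℝ) ^ 2 = M.H := Real.sq_sqrt (by positivity)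
  have qce : 3 * qc ≤ cb * u := by
    apply le_of_sq_le_sq _ (by positivity)
    have : (3 * qc) ^ 2 = 126 * u ^ 2 := by rw [mul_pow, qc2, u2]; ring
    rw [this, mul_pow]
    gcongr; nlinarith
  have qee : 3 * qe ≤ cb * u * Real.sqrt (M.H : ℝ) := by
    apply le_of_sq_le_sq _ (by positivity)
    have : (3 * qe) ^ 2 = 126 * u ^ 2 * Real.sqrt (M.H : ℝ) ^ 2 := by rw [mul_pow, qe2, u2, sH2]; ring
    rw [this, mul_pow, mul_pow]
    gcongr; nlinarith
  have L1 := real_low M.H ι n qe hH hι hN1 qe0 qe2.le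
  have L2 := real_low M.H ι n qc hH hι hN1 qc0 (by
    rw [qc2]; gcongr; nlinarith)
  have B3 := ew_ws_anti_ge v M.H k (fun m => cb * (M.H : ℝ) ^ 2 * ι / (m : ℝ) ^ ((3 : ℝ) / 4)) hN (by
    intro m hm hm2
    have h1 : (0 : ℝ) < m := by exact_mod_cast hm
    have h2 : (m : ℝ) ≤ cnt v k := by exact_mod_cast hm2
    gcongr)
  set z := (n : ℝ) ^ ((3 : ℝ) / 4) with hz
  have z0 : 0 < z := by positivity
  have B4 : 13 * M.H * (qe * Real.sqrt qe) + 13 * M.H * (qc * Real.sqrt qc) ≤ cb * (M.H : ℝ) ^ 2 * ι / z := by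
    calc _ ≤ 13 * M.H * (14 * M.H * ι / z) + 13 * M.H * (14 * M.H * ι / z) := by gcongr
      _ = 364 * ((M.H : ℝ) ^ 2 * ι / z) := by ring
      _ ≤ cb * ((M.H : ℝ) ^ 2 * ι / z) := by gcongr; linarith
      _ = _ := by ring
  set e1 := Real.sqrt (o.sigRef (k + 1) h s a - (o.muRef (k + 1) h s a) ^ 2)
  set e2 := Real.sqrt (o.sigAdv (k + 1) h s a - (o.muAdv (k + 1) h s a) ^ 2)
  have e10 : 0 ≤ e1 := Real.sqrt_nonneg _
  have e20 : 0 ≤ e2 := Real.sqrt_nonneg _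
  have B1 : 3 * qc * e1 ≤ cb * u * e1 := by gcongr
  have B2 : 3 * qe * e2 ≤ cb * u * Real.sqrt (M.H : ℝ) * e2 := by gcongr
  have D1' := (abs_le.1 D1).1
  have D2' := (abs_le.1 D2).1
  have hm := muAdv_eq o h hh s a k hk
  rw [hBR]
  have : cb * u * (e1 + Real.sqrt (M.H : ℝ) * e2) = cb * u * e1 + cb * u * Real.sqrt (M.H : ℝ) * e2 := by ring
  rw [this]
  linarith

/-- On the good event, the estimates are optimistic / pessimistic. -/
lemma opt_all (o : QLAlg M K cb δ) (hι : 1 / 2 ≤ iota S A K M.H δ) (hcb : 1000 ≤ cb)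
    (good : GoodEv o (7 * iota S A K M.H δ)) (k : ℕ) (hk : k ≤ K) :
    (∀ h ∈ Icc 1 M.H, ∀ s a, M.Qstar h s a ≤ o.Q (k + 1) h s a) ∧
    (∀ h ∈ Icc 1 (M.H + 1), ∀ s, M.Vstar h s ≤ o.V (k + 1) h s) ∧
    (∀ h ∈ Icc 1 (M.H + 1), ∀ s, o.VLCB (k + 1) h s ≤ M.Vstar h s) := by
  induction k using Nat.strong_induction_on with
  | _ k ih =>
  have hQ : ∀ h ∈ Icc 1 M.H, ∀ s a, M.Qstar h s a ≤ o.Q (k + 1) h s a := by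
    intro h hh s a
    rcases Nat.eq_zero_or_pos k with h0 | h0
    · subst h0
      rw [o.Q_init h hh]
      exact (Qstar_bounds M h (Finset.mem_Icc.1 hh).1 s a).2
    · obtain ⟨j, rfl⟩ : ∃ j, k = j + 1 := ⟨k - 1, by omega⟩
      have hq := (ih j (by omega) (by omega)).1 h hh s a
      have hh1 : h + 1 ∈ Icc 1 (M.H + 1) := by simp at hh ⊢; omega
      have hV : ∀ i ∈ Icc 1 (j + 1), ∀ t, M.Vstar (h + 1) t ≤ o.V i (h + 1) t := by
        intro i hi t
        have hi' := Finset.mem_Icc.1 hi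
        have := (ih (i - 1) (by omega) (by omega)).2.1 (h + 1) hh1 t
        rwa [Nat.sub_add_cancel hi'.1] at this
      rw [o.Q_upd (j + 1) (by simp; omega) h hh s a]
      split_ifs
      · exact le_min (QR_opt o hι hcb good h hh s a _ hk hV)
          (le_min (QUCB_opt o hι hcb good h hh s a _ hk hV) hq)
      · exact hq
  refine ⟨hQ, ?_, ?_⟩
  · intro h hh s
    by_cases h1 : h = M.H + 1
    · subst h1; rw [Vstar_terminal, (o.V_terminal _ _).1]
    have hh' : h ∈ Icc 1 M.H := by simp at hh ⊢; omega
    rw [V_eq o h hh' s k hk]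
    exact Finset.sup'_mono_fun fun a _ => hQ h hh' s a
  · intro h hh s
    by_cases h1 : h = M.H + 1
    · subst h1; rw [Vstar_terminal, (o.V_terminal _ _).2.2]
    have hh' : h ∈ Icc 1 M.H := by simp at hh ⊢; omega
    rcases Nat.eq_zero_or_pos k with h0 | h0
    · subst h0
      rw [o.VLCB_init h hh']
      exact (Vstar_bounds M h (Finset.mem_Icc.1 hh).1 s).1
    · obtain ⟨j, rfl⟩ : ∃ j, k = j + 1 := ⟨k - 1, by omega⟩
      have hq := (ih j (by omega) (by omega)).2.2 h hh s
      have hh1 : h + 1 ∈ Icc 1 (M.H + 1) := by simp at hh' ⊢; omega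
      have hV : ∀ i ∈ Icc 1 (j + 1), ∀ t, o.VLCB i (h + 1) t ≤ M.Vstar (h + 1) t := by
        intro i hi t
        have hi' := Finset.mem_Icc.1 hi
        have := (ih (i - 1) (by omega) (by omega)).2.2 (h + 1) hh1 t
        rwa [Nat.sub_add_cancel hi'.1] at this
      rw [o.VLCB_upd (j + 1) (by simp; omega) h hh' s]
      split_ifs
      · exact max_le (Finset.sup'_mono_fun fun a _ => QLCB_pess o hι hcb good h hh' s a _ hk hV) hq
      · exact hq

lemma fidelity_det (o : QLAlg M K cb δ) (hι : 1 / 2 ≤ iota S A K M.H δ) (hcb : 1000 ≤ cb)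
    (good : GoodEv o (7 * iota S A K M.H δ)) (k : ℕ) (hk : k ∈ Icc 1 K) (h : ℕ) (hh : h ∈ Icc 1 M.H)
    (s : S) : |o.V k h s - o.VR k h s| ≤ 2 := by
  have hk' := Finset.mem_Icc.1 hk
  obtain ⟨j, rfl⟩ : ∃ j, k = j + 1 := ⟨k - 1, by omega⟩
  have hh1 : h ∈ Icc 1 (M.H + 1) := by simp at hh ⊢; omega
  obtain ⟨_, h1, h2⟩ := opt_all o hι hcb good j (by omega)
  have h1 := h1 h hh1 s
  have h2 := h2 h hh1 s
  have h3 := VR_ge o h hh1 s j (by omega)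
  rw [abs_le]
  rcases settle o h hh s j (by omega) with h4 | h4
  · rw [h4.2]; constructor <;> linarith
  · have := h4.2; constructor <;> linarith

end Opt

/-- **Fidelity of the reference value** (Lemma 4, eq. (35) of the paper).
There is a universal constant `c₀ > 0` such that for any MDP, any `δ ∈ (0,1)` and any
bonus constant `cb ≥ c₀`, with probability at least `1 - δ` over the trajectories,
`|V_h^k(s) - V_h^{R,k}(s)| ≤ 2` for all `(k,h,s) ∈ [K] × [H] × S`. -/
theorem reference_value_fidelity_of_QEarlySettledAdvantage :
    ∃ c₀ : ℝ, 0 < c₀ ∧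
      ∀ (S A : Type) [Fintype S] [Fintype A] [Nonempty S] [Nonempty A]
        [DecidableEq S] [DecidableEq A]
        [MeasurableSpace S] [MeasurableSingletonClass S]
        [MeasurableSpace A] [MeasurableSingletonClass A]
        (M : MDP S A) (K : ℕ) (cb δ : ℝ)
        (Ω : Type) (m0 : MeasurableSpace Ω) (μ : Measure Ω)
        (𝓕 : Filtration ℕ m0) (alg : Ω → QLAlg M K cb δ),
        IsProbabilityMeasure μ → 0 < δ → δ < 1 → 1 ≤ K → c₀ ≤ cb →
        IsMDPTrajectory μ M K 𝓕 (fun k h ω => (alg ω).st k h)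
          (fun k h ω => (alg ω).ac k h) →
        1 - δ ≤ (μ {ω | ∀ k ∈ Icc 1 K, ∀ h ∈ Icc 1 M.H, ∀ s,
            |(alg ω).V k h s - (alg ω).VR k h s| ≤ 2}).toReal := by
  refine ⟨1000, by norm_num, ?_⟩
  intro S A _ _ _ _ _ _ _ _ _ _ M K cb δ Ω m0 μ 𝓕 alg hμ hδ0 hδ1 hK hcb htraj
  rcases Nat.lt_or_ge K 2 with hK2 | hK2
  · have hK1 : K = 1 := by omega
    subst hK1
    have : {ω | ∀ k ∈ Icc 1 1, ∀ h ∈ Icc 1 M.H, ∀ s,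
        |(alg ω).V k h s - (alg ω).VR k h s| ≤ 2} = Set.univ := by
      ext ω
      simp only [Set.mem_setOf_eq, Set.mem_univ, iff_true]
      intro k hk h hh s
      have : k = 1 := by simpa using hk
      subst this
      rw [(alg ω).V_init h hh, (alg ω).VR_init h hh]
      simp
    rw [this, measure_univ]
    simp only [ENNReal.toReal_one]
    linarith
  · set L : ℝ := (Fintype.card S : ℝ) * (Fintype.card A) * (K * M.H) with hL
    have c1 : (1 : ℝ) ≤ Fintype.card S := by exact_mod_cast Fintype.card_pos
    have c2 : (1 : ℝ) ≤ Fintype.card A := by exact_mod_cast Fintype.card_pos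
    have c3 : (1 : ℝ) ≤ M.H := by exact_mod_cast M.H_pos
    have c4 : (2 : ℝ) ≤ K := by exact_mod_cast hK2
    have cSA : (1 : ℝ) ≤ (Fintype.card S : ℝ) * Fintype.card A := one_le_mul_of_one_le_of_one_le c1 c2
    have cSAH : (1 : ℝ) ≤ (Fintype.card S : ℝ) * Fintype.card A * M.H :=
      one_le_mul_of_one_le_of_one_le cSA c3
    have hLK : (K : ℝ) ≤ L := by
      have : L = ((Fintype.card S : ℝ) * Fintype.card A * M.H) * K := by rw [hL]; ring
      rw [this]; nlinarith
    have hL2 : 2 ≤ L := by linarith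
    have hL0 : 0 < L := by linarith
    have hio : iota S A K M.H δ = Real.log (L / δ) := rfl
    have hLd : 2 ≤ L / δ := by rw [le_div_iff₀ hδ0]; nlinarith
    have hι : 1 / 2 ≤ iota S A K M.H δ := by
      rw [hio]
      have h1 := Real.log_le_log (by norm_num) hLd
      have h2 := Real.log_two_gt_d9
      linarith
    have hbad := good_prob μ 𝓕 alg htraj (7 * iota S A K M.H δ)
    have hexp : Real.exp (-(7 * iota S A K M.H δ)) = (δ / L) ^ 7 := by
      rw [hio, ← mul_neg, ← Real.log_inv, inv_div]
      have : (7 : ℝ) * Real.log (δ / L) = ((7 : ℕ) : ℝ) * Real.log (δ / L) := by norm_num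
      rw [this, Real.exp_nat_mul, Real.exp_log (by positivity)]
    have hb : 30 * ((Fintype.card S : ℝ) * Fintype.card A * M.H * K * K)
        * Real.exp (-(7 * iota S A K M.H δ)) ≤ δ := by
      rw [hexp]
      have e1 : (Fintype.card S : ℝ) * Fintype.card A * M.H * K * K = L * K := by rw [hL]; ring
      rw [e1]
      have h7 : δ ^ 7 ≤ δ := by
        calc δ ^ 7 ≤ δ ^ 1 := pow_le_pow_of_le_one hδ0.le hδ1.le (by norm_num)
          _ = δ := pow_one _
      have h5 : (30 : ℝ) ≤ L ^ 5 := by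
        calc (30 : ℝ) ≤ 2 ^ 5 := by norm_num
          _ ≤ L ^ 5 := by gcongr
      rw [div_pow, ← mul_div_assoc, div_le_iff₀ (by positivity)]
      calc 30 * (L * K) * δ ^ 7 ≤ L ^ 5 * (L * L) * δ := by gcongr
        _ = δ * L ^ 7 := by ring
    set G := {ω | ∀ k ∈ Icc 1 K, ∀ h ∈ Icc 1 M.H, ∀ s,
        |(alg ω).V k h s - (alg ω).VR k h s| ≤ 2} with hG
    set B := {ω | ¬ GoodEv (alg ω) (7 * iota S A K M.H δ)} with hB
    have hcov : (Set.univ : Set Ω) ⊆ G ∪ B := by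
      intro ω _
      by_cases hg : GoodEv (alg ω) (7 * iota S A K M.H δ)
      · left
        intro k hk h hh s
        exact fidelity_det (alg ω) hι hcb hg k hk h hh s
      · right; exact hg
    have h1 : (1 : ENNReal) ≤ μ G + ENNReal.ofReal δ := by
      calc (1 : ENNReal) = μ Set.univ := measure_univ.symm
        _ ≤ μ (G ∪ B) := measure_mono hcov
        _ ≤ μ G + μ B := measure_union_le _ _
        _ ≤ μ G + ENNReal.ofReal δ := by
          gcongr
          exact hbad.trans (ENNReal.ofReal_le_ofReal hb)
    have h2 := ENNReal.toReal_mono (by simp) h1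
    rw [ENNReal.toReal_add (measure_ne_top _ _) (by simp), ENNReal.toReal_ofReal hδ0.le,
      ENNReal.toReal_one] at h2
    linarith
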